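/- arXiv:math/0602316 — 11 statements merged into one kernel-verified Lean document; each statement's English description precedes it below -/
import Mathlib

section
/- λ' ∘ ρ' = id_H, and ρ' ∘ λ' = id_E + D ∘ κ' + κ' ∘ D. (Thus λ' and ρ' are mutually inverse homotopy equivalences up to the homotopy κ'.) -/
/-!
Since `κ'` both begins and ends with `κ`, the side conditions on `κ` pass to `κ'`: it squares to
zero, `lam κ' = 0` and `κ' ρ = 0`. This reduces `lam' ρ'` to `lam ρ = 1`. For the homotopy,
`(1 + κ'δ)(1 + dκ + κd)(1 + δκ')` expands, using `κ(1 + δκ') = κ' = (1 + κ'δ)κ`, to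
`1 + (d + δ)κ' + κ'(d + δ) + κ'(dδ + δd + δδ)κ'`, and the last term vanishes by the Maurer–Cartan
equation `dδ + δd + δδ = 0`.
-/

theorem maurerCartan_of_mul_self_eq_zero {R : Type*} [NonUnitalNonAssocSemiring R] {d δ : R}
    (hd : d * d = 0) (hD : (d + δ) * (d + δ) = 0) : d * δ + δ * d + δ * δ = 0 := by
  simpa only [add_mul, mul_add, hd, zero_add, add_assoc, add_left_comm] using hD

theorem comp_one_add_mul_comp_one_add_mul_comp {S E H : Type*} [Semiring S] [AddCommMonoid E]
    [Module S E] [AddCommMonoid H] [Module S H] {κ : Module.End S E} (δ : Module.End S E)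
    {lam : E →ₗ[S] H} {ρ : H →ₗ[S] E} (hκ : κ * κ = 0) (hlam : lam ∘ₗ κ = 0) (hρ : κ ∘ₗ ρ = 0) :
    (lam ∘ₗ (1 + δ * κ)) ∘ₗ ((1 + κ * δ) ∘ₗ ρ) = lam ∘ₗ ρ := by
  have hmid : (1 + δ * κ) * (1 + κ * δ) = 1 + δ * κ + κ * δ := by
    rw [mul_add, mul_one, add_mul 1 (δ * κ), one_mul, mul_assoc δ, ← mul_assoc κ κ, hκ,
      zero_mul, mul_zero, add_zero]
  calc (lam ∘ₗ (1 + δ * κ)) ∘ₗ ((1 + κ * δ) ∘ₗ ρ)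
      = lam ∘ₗ ((1 + δ * κ) * (1 + κ * δ)) ∘ₗ ρ := rfl
    _ = lam ∘ₗ ρ + lam ∘ₗ δ ∘ₗ (κ ∘ₗ ρ) + (lam ∘ₗ κ) ∘ₗ δ ∘ₗ ρ := by
        rw [hmid]
        simp only [LinearMap.add_comp, LinearMap.comp_add, Module.End.one_eq_id,
          Module.End.mul_eq_comp, LinearMap.id_comp, LinearMap.comp_assoc]
    _ = lam ∘ₗ ρ := by
        rw [hρ, hlam, LinearMap.comp_zero, LinearMap.comp_zero, LinearMap.zero_comp, add_zero,
          add_zero]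

/-- `κ'` is the sum `κ + κδκ + κδκδκ + ⋯` of the homological perturbation lemma. As no convergence
is available in a general semiring, the sum is encoded by the two fixed-point equations obtained by
splitting off the first or the last factor `κ`. -/
structure IsPerturbedHomotopy {R : Type*} [Semiring R] (κ δ κ' : R) : Prop where
  eq_mul_one_add : κ' = κ * (1 + δ * κ')
  eq_one_add_mul : κ' = (1 + κ' * δ) * κ

namespace IsPerturbedHomotopy

section Semiring

variable {R : Type*} [Semiring R] {d κ δ κ' : R}

theorem mul_self_eq_zero (h : IsPerturbedHomotopy κ δ κ') (hκ : κ * κ = 0) : κ' * κ' = 0 :=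
  calc κ' * κ' = ((1 + κ' * δ) * κ) * (κ * (1 + δ * κ')) := by
        rw [← h.eq_one_add_mul, ← h.eq_mul_one_add]
    _ = (1 + κ' * δ) * (κ * κ) * (1 + δ * κ') := by simp only [mul_assoc]
    _ = 0 := by rw [hκ, mul_zero, zero_mul]

theorem mul_one_add_anticommutator_mul (h : IsPerturbedHomotopy κ δ κ')
    (hδ : d * δ + δ * d + δ * δ = 0) :
    (1 + κ' * δ) * (1 + d * κ + κ * d) * (1 + δ * κ') =
      1 + (d + δ) * κ' + κ' * (d + δ) :=
  calc (1 + κ' * δ) * (1 + d * κ + κ * d) * (1 + δ * κ')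
      = (1 + κ' * δ) * (1 + δ * κ') + (1 + κ' * δ) * d * (κ * (1 + δ * κ')) +
          (1 + κ' * δ) * κ * d * (1 + δ * κ') := by noncomm_ring
    _ = (1 + κ' * δ) * (1 + δ * κ') + (1 + κ' * δ) * d * κ' + κ' * d * (1 + δ * κ') := by
        rw [← h.eq_mul_one_add, ← h.eq_one_add_mul]
    _ = 1 + (d + δ) * κ' + κ' * (d + δ) + κ' * (d * δ + δ * d + δ * δ) * κ' := by
        noncomm_ring
    _ = 1 + (d + δ) * κ' + κ' * (d + δ) := by rw [hδ, mul_zero, zero_mul, add_zero]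

end Semiring

section Module

variable {S E H : Type*} [Semiring S] [AddCommMonoid E] [Module S E] [AddCommMonoid H] [Module S H]
  {κ δ κ' : Module.End S E}

theorem comp_homotopy_eq_zero (h : IsPerturbedHomotopy κ δ κ') {lam : E →ₗ[S] H}
    (hlam : lam ∘ₗ κ = 0) : lam ∘ₗ κ' = 0 := by
  rw [h.eq_mul_one_add, Module.End.mul_eq_comp, ← LinearMap.comp_assoc, hlam, LinearMap.zero_comp]

theorem homotopy_comp_eq_zero (h : IsPerturbedHomotopy κ δ κ') {ρ : H →ₗ[S] E}
    (hρ : κ ∘ₗ ρ = 0) : κ' ∘ₗ ρ = 0 := by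
  rw [h.eq_one_add_mul, Module.End.mul_eq_comp, LinearMap.comp_assoc, hρ, LinearMap.comp_zero]

end Module

end IsPerturbedHomotopy

/-- The data of a contraction (strong deformation retract) of `(E, d)` onto `H`: a projection `lam`,
an inclusion `ρ` and a homotopy `κ`, with sign convention `ρ lam = 1 + dκ + κd` and subject to the
side conditions `κκ = 0`, `lam κ = 0`, `κρ = 0`. The operator `d` may be any endomorphism, and the
operator `lam d ρ` it induces on `H` is not part of the data. -/
structure IsContraction {S E H : Type*} [Semiring S] [AddCommMonoid E] [Module S E]
    [AddCommMonoid H] [Module S H] (d κ : Module.End S E) (lam : E →ₗ[S] H) (ρ : H →ₗ[S] E) :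
    Prop where
  proj_comp_incl : lam ∘ₗ ρ = LinearMap.id
  incl_comp_proj : ρ ∘ₗ lam = 1 + d * κ + κ * d
  homotopy_mul_self : κ * κ = 0
  proj_comp_homotopy : lam ∘ₗ κ = 0
  homotopy_comp_incl : κ ∘ₗ ρ = 0

theorem perturbation_homotopy_equivalence_general {S E H : Type*} [Semiring S]
    [AddCommMonoid E] [Module S E] [AddCommMonoid H] [Module S H]
    {d κ δ κ' : Module.End S E} {lam : E →ₗ[S] H} {ρ : H →ₗ[S] E}
    (hc : IsContraction d κ lam ρ) (hδ : d * δ + δ * d + δ * δ = 0)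
    (hκ' : IsPerturbedHomotopy κ δ κ') :
    IsContraction (d + δ) κ' (lam ∘ₗ (1 + δ * κ')) ((1 + κ' * δ) ∘ₗ ρ) := by
  have hsq : κ' * κ' = 0 := hκ'.mul_self_eq_zero hc.homotopy_mul_self
  have hlam : lam ∘ₗ κ' = 0 := hκ'.comp_homotopy_eq_zero hc.proj_comp_homotopy
  have hρ : κ' ∘ₗ ρ = 0 := hκ'.homotopy_comp_eq_zero hc.homotopy_comp_incl
  refine ⟨?_, ?_, hsq, ?_, ?_⟩
  · rw [comp_one_add_mul_comp_one_add_mul_comp δ hsq hlam hρ, hc.proj_comp_incl]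
  · calc ((1 + κ' * δ) ∘ₗ ρ) ∘ₗ (lam ∘ₗ (1 + δ * κ'))
        = (1 + κ' * δ) * (ρ ∘ₗ lam) * (1 + δ * κ') := rfl
      _ = 1 + (d + δ) * κ' + κ' * (d + δ) := by
          rw [hc.incl_comp_proj, hκ'.mul_one_add_anticommutator_mul hδ]
  · calc (lam ∘ₗ (1 + δ * κ')) ∘ₗ κ' = lam ∘ₗ ((1 + δ * κ') * κ') := rfl
      _ = 0 := by rw [add_mul, one_mul, mul_assoc, hsq, mul_zero, add_zero, hlam]
  · calc κ' ∘ₗ ((1 + κ' * δ) ∘ₗ ρ) = (κ' * (1 + κ' * δ)) ∘ₗ ρ := rfl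
      _ = 0 := by rw [mul_add, mul_one, ← mul_assoc, hsq, zero_mul, add_zero, hρ]

/-- Differential perturbation lemma, part (1):
`λ' ∘ ρ' = id_H` and `ρ' ∘ λ' = id_E + D ∘ κ' + κ' ∘ D`. -/
theorem perturbation_homotopy_equivalence
    {S E H : Type*} [Ring S]
    [AddCommGroup E] [Module S E] [AddCommGroup H] [Module S H]
    (d κ δ κ' εl εr D : E →ₗ[S] E)
    (lam lam' : E →ₗ[S] H) (ρ ρ' : H →ₗ[S] E)
    (h1 : lam ∘ₗ ρ = LinearMap.id)
    (h2 : ρ ∘ₗ lam = LinearMap.id + d ∘ₗ κ + κ ∘ₗ d)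
    (hκκ : κ ∘ₗ κ = 0) (hdd : d ∘ₗ d = 0)
    (hld : lam ∘ₗ d = 0) (hdρ : d ∘ₗ ρ = 0)
    (hlk : lam ∘ₗ κ = 0) (hκρ : κ ∘ₗ ρ = 0)
    (hD : D = d + δ) (hDD : D ∘ₗ D = 0)
    (hεl : εl = δ ∘ₗ κ') (hεr : εr = κ' ∘ₗ δ)
    (hκ'l : κ' = κ ∘ₗ (LinearMap.id + εl))
    (hκ'r : κ' = (LinearMap.id + εr) ∘ₗ κ)
    (hκ'κ' : κ' ∘ₗ κ' = 0)
    (hlam' : lam' = lam ∘ₗ (LinearMap.id + εl))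
    (hρ' : ρ' = (LinearMap.id + εr) ∘ₗ ρ) :
    lam' ∘ₗ ρ' = LinearMap.id ∧
      ρ' ∘ₗ lam' = LinearMap.id + D ∘ₗ κ' + κ' ∘ₗ D := by
  subst hD hεl hεr hlam' hρ'
  have hc := perturbation_homotopy_equivalence_general ⟨h1, h2, hκκ, hlk, hκρ⟩
    (maurerCartan_of_mul_self_eq_zero hdd hDD) ⟨hκ'l, hκ'r⟩
  exact ⟨hc.proj_comp_incl, hc.incl_comp_proj⟩
end

section
/- The four S-linear maps H → H given by λ' ∘ D ∘ ρ, λ' ∘ δ ∘ ρ, λ ∘ D ∘ ρ', and λ ∘ δ ∘ ρ' all coincide; i.e. the perturbed differential ∂ on H is equally computed by any of these four formulas. -/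
section LinearMapComposition

variable {S E F H K : Type*} [Semiring S]
  [AddCommMonoid E] [Module S E] [AddCommMonoid F] [Module S F]
  [AddCommMonoid H] [Module S H] [AddCommMonoid K] [Module S K]

theorem add_comp_eq_right_of_comp_eq_zero {f g : E →ₗ[S] F} {h : K →ₗ[S] E} (hf : f ∘ₗ h = 0) :
    (f + g) ∘ₗ h = g ∘ₗ h := by
  rw [LinearMap.add_comp, hf, zero_add]

theorem comp_add_eq_right_of_comp_eq_zero {f g : E →ₗ[S] F} {h : F →ₗ[S] H} (hf : h ∘ₗ f = 0) :
    h ∘ₗ (f + g) = h ∘ₗ g := by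
  rw [LinearMap.comp_add, hf, zero_add]

theorem id_add_comp_comp_eq_comp_id_add_comp (f : E →ₗ[S] F) (g : F →ₗ[S] E) :
    (LinearMap.id + f ∘ₗ g) ∘ₗ f = f ∘ₗ (LinearMap.id + g ∘ₗ f) := by
  rw [LinearMap.add_comp, LinearMap.comp_add, LinearMap.id_comp, LinearMap.comp_id,
    LinearMap.comp_assoc]

theorem perturbation_differential_four_formulas_general
    {d δ D : E →ₗ[S] F} {κ' : F →ₗ[S] E} {εl : F →ₗ[S] F} {εr : E →ₗ[S] E}
    {lam lam' : F →ₗ[S] H} {ρ ρ' : K →ₗ[S] E}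
    (hld : lam ∘ₗ d = 0) (hdρ : d ∘ₗ ρ = 0) (hD : D = d + δ)
    (hεl : εl = δ ∘ₗ κ') (hεr : εr = κ' ∘ₗ δ)
    (hlam' : lam' = lam ∘ₗ (LinearMap.id + εl))
    (hρ' : ρ' = (LinearMap.id + εr) ∘ₗ ρ) :
    lam' ∘ₗ D ∘ₗ ρ = lam' ∘ₗ δ ∘ₗ ρ ∧
      lam' ∘ₗ δ ∘ₗ ρ = lam ∘ₗ D ∘ₗ ρ' ∧
      lam ∘ₗ D ∘ₗ ρ' = lam ∘ₗ δ ∘ₗ ρ' := by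
  have hDρ : D ∘ₗ ρ = δ ∘ₗ ρ := by
    rw [hD, add_comp_eq_right_of_comp_eq_zero hdρ]
  have hlamD : lam ∘ₗ D = lam ∘ₗ δ := by
    rw [hD, comp_add_eq_right_of_comp_eq_zero hld]
  have hlamDρ' : lam ∘ₗ D ∘ₗ ρ' = lam ∘ₗ δ ∘ₗ ρ' := by
    rw [← LinearMap.comp_assoc, hlamD, LinearMap.comp_assoc]
  have hδ : lam' ∘ₗ δ ∘ₗ ρ = lam ∘ₗ δ ∘ₗ ρ' := calc
    lam' ∘ₗ δ ∘ₗ ρ = lam ∘ₗ ((LinearMap.id + δ ∘ₗ κ') ∘ₗ δ) ∘ₗ ρ := by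
      simp only [hlam', hεl, LinearMap.comp_assoc]
    _ = lam ∘ₗ (δ ∘ₗ (LinearMap.id + κ' ∘ₗ δ)) ∘ₗ ρ := by
      rw [id_add_comp_comp_eq_comp_id_add_comp]
    _ = lam ∘ₗ δ ∘ₗ ρ' := by
      simp only [hρ', hεr, LinearMap.comp_assoc]
  exact ⟨by rw [hDρ], hδ.trans hlamDρ'.symm, hlamDρ'⟩

end LinearMapComposition

/-- Differential perturbation lemma, part (2): the four formulas
`λ' ∘ D ∘ ρ`, `λ' ∘ δ ∘ ρ`, `λ ∘ D ∘ ρ'`, `λ ∘ δ ∘ ρ'` define the same operator on `H`. -/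
theorem perturbation_differential_four_formulas
    {S E H : Type*} [Ring S]
    [AddCommGroup E] [Module S E] [AddCommGroup H] [Module S H]
    (d κ δ κ' εl εr D : E →ₗ[S] E)
    (lam lam' : E →ₗ[S] H) (ρ ρ' : H →ₗ[S] E)
    (h1 : lam ∘ₗ ρ = LinearMap.id)
    (h2 : ρ ∘ₗ lam = LinearMap.id + d ∘ₗ κ + κ ∘ₗ d)
    (hκκ : κ ∘ₗ κ = 0) (hdd : d ∘ₗ d = 0)
    (hld : lam ∘ₗ d = 0) (hdρ : d ∘ₗ ρ = 0)
    (hlk : lam ∘ₗ κ = 0) (hκρ : κ ∘ₗ ρ = 0)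
    (hD : D = d + δ) (hDD : D ∘ₗ D = 0)
    (hεl : εl = δ ∘ₗ κ') (hεr : εr = κ' ∘ₗ δ)
    (hκ'l : κ' = κ ∘ₗ (LinearMap.id + εl))
    (hκ'r : κ' = (LinearMap.id + εr) ∘ₗ κ)
    (hκ'κ' : κ' ∘ₗ κ' = 0)
    (hlam' : lam' = lam ∘ₗ (LinearMap.id + εl))
    (hρ' : ρ' = (LinearMap.id + εr) ∘ₗ ρ) :
    lam' ∘ₗ D ∘ₗ ρ = lam' ∘ₗ δ ∘ₗ ρ ∧
      lam' ∘ₗ δ ∘ₗ ρ = lam ∘ₗ D ∘ₗ ρ' ∧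
      lam ∘ₗ D ∘ₗ ρ' = lam ∘ₗ δ ∘ₗ ρ' :=
  perturbation_differential_four_formulas_general hld hdρ hD hεl hεr hlam' hρ'
end

section
/- ∂ ∘ ∂ = 0, i.e. the induced operator ∂ = λ' ∘ δ ∘ ρ provides H with a differential. -/
/-!
Put `A = δ + δκ'δ`, so that `∂ = λAρ` and `∂∂ = λ(AρλA)ρ`. Since `(1 + δκ')δ = A = δ(1 + κ'δ)`,
`κA = κ'δ` and `Aκ = δκ'`, multiplying the perturbation equation `dδ + δd + δδ = 0` by `1 + δκ'` on
the left and by `1 + κ'δ` on the right turns it into `AρλA + dA + Ad = 0`, where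
`ρλ = 1 + dκ + κd`. The terms `dA` and `Ad` vanish between `λ` and `ρ`, because `λd = 0` and
`dρ = 0`.
-/

section EffectivePerturbation

variable {R : Type*} [Semiring R] {d κ δ κ' : R}

theorem add_mul_self_eq_zero_iff_of_mul_self_eq_zero (hd : d * d = 0) :
    (d + δ) * (d + δ) = 0 ↔ d * δ + δ * d + δ * δ = 0 := by
  rw [add_mul, mul_add, mul_add, hd, zero_add, ← add_assoc]

/-- The operator `A` whose compression `λAρ` to `H` is the transferred differential. When
`κ' = κ + κδκ + κδκδκ + ⋯`, it is the sum `δ + δκδ + δκδκδ + ⋯`; it is encoded in closed form, so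
that no convergence is involved. -/
def effectivePerturbation (δ κ' : R) : R :=
  δ + δ * κ' * δ

theorem one_add_mul_mul_eq_effectivePerturbation (δ κ' : R) :
    (1 + δ * κ') * δ = effectivePerturbation δ κ' := by
  rw [effectivePerturbation, add_mul, one_mul]

theorem mul_one_add_mul_eq_effectivePerturbation (δ κ' : R) :
    δ * (1 + κ' * δ) = effectivePerturbation δ κ' := by
  rw [effectivePerturbation, mul_add, mul_one, mul_assoc]

theorem mul_effectivePerturbation (hκ' : κ' = κ * (1 + δ * κ')) :
    κ * effectivePerturbation δ κ' = κ' * δ := by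
  rw [← one_add_mul_mul_eq_effectivePerturbation, ← mul_assoc, ← hκ']

theorem effectivePerturbation_mul (hκ' : κ' = (1 + κ' * δ) * κ) :
    effectivePerturbation δ κ' * κ = δ * κ' := by
  rw [← mul_one_add_mul_eq_effectivePerturbation, mul_assoc, ← hκ']

theorem effectivePerturbation_mul_mul_self_add_eq_zero
    (hδ : d * δ + δ * d + δ * δ = 0)
    (hκ'l : κ' = κ * (1 + δ * κ')) (hκ'r : κ' = (1 + κ' * δ) * κ) :
    effectivePerturbation δ κ' * (1 + d * κ + κ * d) * effectivePerturbation δ κ' +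
      (d * effectivePerturbation δ κ' + effectivePerturbation δ κ' * d) = 0 := by
  have hκA := mul_effectivePerturbation hκ'l
  have hAκ := effectivePerturbation_mul hκ'r
  have huδ := one_add_mul_mul_eq_effectivePerturbation δ κ'
  have hδv := mul_one_add_mul_eq_effectivePerturbation δ κ'
  set A := effectivePerturbation δ κ'
  calc A * (1 + d * κ + κ * d) * A + (d * A + A * d)
      = (1 + A * κ) * d * A + A * d * (1 + κ * A) + A * A := by
        simp only [mul_add, add_mul, mul_one, one_mul, mul_assoc]
        abel
    _ = (1 + δ * κ') * d * A + A * d * (1 + κ' * δ) + A * A := by rw [hκA, hAκ]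
    _ = (1 + δ * κ') * d * (δ * (1 + κ' * δ)) + (1 + δ * κ') * δ * d * (1 + κ' * δ) +
          (1 + δ * κ') * δ * (δ * (1 + κ' * δ)) := by rw [huδ, hδv]
    _ = (1 + δ * κ') * (d * δ + δ * d + δ * δ) * (1 + κ' * δ) := by
        generalize 1 + δ * κ' = u, 1 + κ' * δ = v
        simp only [mul_add, add_mul, mul_assoc]
    _ = 0 := by rw [hδ, mul_zero, zero_mul]

end EffectivePerturbation

section Transfer

variable {S E H : Type*} [Semiring S] [AddCommMonoid E] [Module S E] [AddCommMonoid H] [Module S H]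

theorem compression_comp_self_eq_zero
    {d A : E →ₗ[S] E} {lam : E →ₗ[S] H} {ρ : H →ₗ[S] E}
    (hld : lam ∘ₗ d = 0) (hdρ : d ∘ₗ ρ = 0)
    (hA : A ∘ₗ (ρ ∘ₗ lam) ∘ₗ A + (d ∘ₗ A + A ∘ₗ d) = 0) :
    (lam ∘ₗ A ∘ₗ ρ) ∘ₗ (lam ∘ₗ A ∘ₗ ρ) = 0 := by
  have hdAρ : lam ∘ₗ (d ∘ₗ A + A ∘ₗ d) ∘ₗ ρ = 0 := by
    rw [LinearMap.add_comp, LinearMap.comp_add, LinearMap.comp_assoc, LinearMap.comp_assoc, hdρ,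
      ← LinearMap.comp_assoc, hld, LinearMap.zero_comp, LinearMap.comp_zero, LinearMap.comp_zero,
      add_zero]
  calc (lam ∘ₗ A ∘ₗ ρ) ∘ₗ (lam ∘ₗ A ∘ₗ ρ)
      = lam ∘ₗ (A ∘ₗ (ρ ∘ₗ lam) ∘ₗ A) ∘ₗ ρ + lam ∘ₗ (d ∘ₗ A + A ∘ₗ d) ∘ₗ ρ := by
        simp only [hdAρ, add_zero, LinearMap.comp_assoc]
    _ = lam ∘ₗ (A ∘ₗ (ρ ∘ₗ lam) ∘ₗ A + (d ∘ₗ A + A ∘ₗ d)) ∘ₗ ρ := by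
        rw [← LinearMap.comp_add, ← LinearMap.add_comp]
    _ = 0 := by rw [hA, LinearMap.zero_comp, LinearMap.comp_zero]

theorem perturbation_differential_squares_to_zero_general
    {d κ δ κ' : E →ₗ[S] E} {lam : E →ₗ[S] H} {ρ : H →ₗ[S] E}
    (hρl : ρ ∘ₗ lam = LinearMap.id + d ∘ₗ κ + κ ∘ₗ d)
    (hdd : d ∘ₗ d = 0) (hld : lam ∘ₗ d = 0) (hdρ : d ∘ₗ ρ = 0)
    (hDD : (d + δ) ∘ₗ (d + δ) = 0)
    (hκ'l : κ' = κ ∘ₗ (LinearMap.id + δ ∘ₗ κ'))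
    (hκ'r : κ' = (LinearMap.id + κ' ∘ₗ δ) ∘ₗ κ) :
    ((lam ∘ₗ (LinearMap.id + δ ∘ₗ κ')) ∘ₗ δ ∘ₗ ρ) ∘ₗ
      ((lam ∘ₗ (LinearMap.id + δ ∘ₗ κ')) ∘ₗ δ ∘ₗ ρ) = 0 := by
  simp only [← Module.End.mul_eq_comp, ← Module.End.one_eq_id] at hρl hdd hDD hκ'l hκ'r
  have hδ : d * δ + δ * d + δ * δ = 0 :=
    (add_mul_self_eq_zero_iff_of_mul_self_eq_zero hdd).mp hDD
  have hA := effectivePerturbation_mul_mul_self_add_eq_zero hδ hκ'l hκ'r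
  rw [← hρl, mul_assoc] at hA
  have hdiff : (lam ∘ₗ (LinearMap.id + δ ∘ₗ κ')) ∘ₗ δ ∘ₗ ρ =
      lam ∘ₗ effectivePerturbation (R := Module.End S E) δ κ' ∘ₗ ρ := by
    rw [← one_add_mul_mul_eq_effectivePerturbation, Module.End.mul_eq_comp, Module.End.one_eq_id,
      Module.End.mul_eq_comp, LinearMap.comp_assoc, LinearMap.comp_assoc]
  rw [hdiff]
  exact compression_comp_self_eq_zero hld hdρ hA

end Transfer

/-- Differential perturbation lemma, part (3): `∂ ∘ ∂ = 0`, where `∂ = λ' ∘ δ ∘ ρ`. -/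
theorem perturbation_differential_squares_to_zero
    {S E H : Type*} [Ring S]
    [AddCommGroup E] [Module S E] [AddCommGroup H] [Module S H]
    (d κ δ κ' εl εr D : E →ₗ[S] E)
    (lam lam' : E →ₗ[S] H) (ρ ρ' : H →ₗ[S] E)
    (h1 : lam ∘ₗ ρ = LinearMap.id)
    (h2 : ρ ∘ₗ lam = LinearMap.id + d ∘ₗ κ + κ ∘ₗ d)
    (hκκ : κ ∘ₗ κ = 0) (hdd : d ∘ₗ d = 0)
    (hld : lam ∘ₗ d = 0) (hdρ : d ∘ₗ ρ = 0)
    (hlk : lam ∘ₗ κ = 0) (hκρ : κ ∘ₗ ρ = 0)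
    (hD : D = d + δ) (hDD : D ∘ₗ D = 0)
    (hεl : εl = δ ∘ₗ κ') (hεr : εr = κ' ∘ₗ δ)
    (hκ'l : κ' = κ ∘ₗ (LinearMap.id + εl))
    (hκ'r : κ' = (LinearMap.id + εr) ∘ₗ κ)
    (hκ'κ' : κ' ∘ₗ κ' = 0)
    (hlam' : lam' = lam ∘ₗ (LinearMap.id + εl))
    (hρ' : ρ' = (LinearMap.id + εr) ∘ₗ ρ) :
    (lam' ∘ₗ δ ∘ₗ ρ) ∘ₗ (lam' ∘ₗ δ ∘ₗ ρ) = 0 := by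
  subst hD hεl hεr hlam'
  exact perturbation_differential_squares_to_zero_general h2 hdd hld hdρ hDD hκ'l hκ'r
end

section
/- ∂ ∘ λ' = λ' ∘ D and ρ' ∘ ∂ = D ∘ ρ'; i.e. λ' : (E, D) → (H, ∂) and ρ' : (H, ∂) → (E, D) are morphisms of complexes. -/
section Semiring

variable {R : Type*} [Semiring R] {d δ κ κ' : R}

theorem semiconjBy_one_add_mul_homotopy (hMC : d * δ + δ * d + δ * δ = 0)
    (hl : κ' = κ * (1 + δ * κ')) (hr : κ' = (1 + κ' * δ) * κ) :
    SemiconjBy (1 + δ * κ') (d + δ) (d + (1 + δ * κ') * δ * (1 + d * κ + κ * d)) := by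
  have h_absorb : (1 + δ * κ') * δ * κ = δ * κ' :=
    calc
      (1 + δ * κ') * δ * κ = δ * ((1 + κ' * δ) * κ) := by noncomm_ring
      _ = δ * κ' := by rw [← hr]
  set A := 1 + δ * κ' with hA
  refine Eq.symm ?_
  calc
    (d + A * δ * (1 + d * κ + κ * d)) * A
        = d * A + A * δ * A + A * δ * d * (κ * A) + A * δ * κ * d * A := by noncomm_ring
    _ = d * A + A * δ * A + A * δ * d * κ' + δ * κ' * d * A := by rw [← hl, h_absorb]
    _ = A * (d * A + δ * A + δ * d * κ') := by rw [hA]; noncomm_ring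
    _ = A * (d + δ) + A * (d * δ + δ * d + δ * δ) * κ' := by rw [hA]; noncomm_ring
    _ = A * (d + δ) := by rw [hMC, mul_zero, zero_mul, add_zero]

theorem semiconjBy_one_add_homotopy_mul (hMC : d * δ + δ * d + δ * δ = 0)
    (hl : κ' = κ * (1 + δ * κ')) (hr : κ' = (1 + κ' * δ) * κ) :
    SemiconjBy (1 + κ' * δ) (d + (1 + d * κ + κ * d) * (δ * (1 + κ' * δ))) (d + δ) := by
  have hMC_op : δ * d + d * δ + δ * δ = 0 := by rwa [add_comm (δ * d)]
  rw [add_right_comm 1, ← MulOpposite.semiconjBy_op]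
  exact semiconjBy_one_add_mul_homotopy (congrArg MulOpposite.op hMC_op)
    (congrArg MulOpposite.op hr) (congrArg MulOpposite.op hl)

end Semiring

section Module

variable {S E H : Type*} [Semiring S] [AddCommMonoid E] [Module S E] [AddCommMonoid H]
  [Module S H] {a x y z : Module.End S E}

theorem comp_mul_eq_of_semiconjBy_add {f : E →ₗ[S] H} (ha : SemiconjBy a x (y + z))
    (hf : f ∘ₗ y = 0) : f ∘ₗ (a * x) = f ∘ₗ (z * a) := by
  rw [ha.eq, add_mul, LinearMap.comp_add, Module.End.mul_eq_comp y, ← LinearMap.comp_assoc, hf,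
    LinearMap.zero_comp, zero_add]

theorem mul_comp_eq_of_semiconjBy_add {g : H →ₗ[S] E} (ha : SemiconjBy a (y + z) x)
    (hg : y ∘ₗ g = 0) : (a * z) ∘ₗ g = (x * a) ∘ₗ g := by
  rw [← ha.eq, mul_add, LinearMap.add_comp, Module.End.mul_eq_comp a y, LinearMap.comp_assoc, hg,
    LinearMap.comp_zero, zero_add]

end Module

theorem perturbation_chain_maps_general
    {S E H : Type*} [Semiring S]
    [AddCommMonoid E] [Module S E] [AddCommMonoid H] [Module S H]
    (d κ δ κ' εl εr D : E →ₗ[S] E)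
    (lam lam' : E →ₗ[S] H) (ρ ρ' : H →ₗ[S] E)
    (hρlam : ρ ∘ₗ lam = LinearMap.id + d ∘ₗ κ + κ ∘ₗ d)
    (hdd : d ∘ₗ d = 0)
    (hld : lam ∘ₗ d = 0) (hdρ : d ∘ₗ ρ = 0)
    (hD : D = d + δ) (hDD : D ∘ₗ D = 0)
    (hεl : εl = δ ∘ₗ κ') (hεr : εr = κ' ∘ₗ δ)
    (hκ'l : κ' = κ ∘ₗ (LinearMap.id + εl))
    (hκ'r : κ' = (LinearMap.id + εr) ∘ₗ κ)
    (hlam' : lam' = lam ∘ₗ (LinearMap.id + εl))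
    (hρ' : ρ' = (LinearMap.id + εr) ∘ₗ ρ) :
    (lam' ∘ₗ δ ∘ₗ ρ) ∘ₗ lam' = lam' ∘ₗ D ∧
      ρ' ∘ₗ (lam' ∘ₗ δ ∘ₗ ρ) = D ∘ₗ ρ' := by
  subst hD hεl hεr hlam' hρ'
  have hMC : d * δ + δ * d + δ * δ = 0 := maurerCartan_of_mul_self_eq_zero hdd hDD
  have hA := semiconjBy_one_add_mul_homotopy hMC hκ'l hκ'r
  have hB := semiconjBy_one_add_homotopy_mul hMC hκ'l hκ'r
  have h_swap : (1 + δ * κ') * δ = δ * (1 + κ' * δ) := by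
    rw [one_add_mul, mul_one_add, mul_assoc]
  change ρ ∘ₗ lam = 1 + d * κ + κ * d at hρlam
  rw [← hρlam] at hA hB
  refine ⟨(comp_mul_eq_of_semiconjBy_add hA hld).symm, ?_⟩
  calc
    ((1 + κ' * δ) ∘ₗ ρ) ∘ₗ lam ∘ₗ (1 + δ * κ') ∘ₗ δ ∘ₗ ρ
        = ((1 + κ' * δ) * ((ρ ∘ₗ lam) * ((1 + δ * κ') * δ))) ∘ₗ ρ := rfl
    _ = ((d + δ) * (1 + κ' * δ)) ∘ₗ ρ := by
      rw [h_swap, mul_comp_eq_of_semiconjBy_add hB hdρ]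

/-- Differential perturbation lemma, part (4): `λ'` and `ρ'` are morphisms of complexes:
`∂ ∘ λ' = λ' ∘ D` and `ρ' ∘ ∂ = D ∘ ρ'`, where `∂ = λ' ∘ δ ∘ ρ`. -/
theorem perturbation_chain_maps
    {S E H : Type*} [Ring S]
    [AddCommGroup E] [Module S E] [AddCommGroup H] [Module S H]
    (d κ δ κ' εl εr D : E →ₗ[S] E)
    (lam lam' : E →ₗ[S] H) (ρ ρ' : H →ₗ[S] E)
    (h1 : lam ∘ₗ ρ = LinearMap.id)
    (h2 : ρ ∘ₗ lam = LinearMap.id + d ∘ₗ κ + κ ∘ₗ d)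
    (hκκ : κ ∘ₗ κ = 0) (hdd : d ∘ₗ d = 0)
    (hld : lam ∘ₗ d = 0) (hdρ : d ∘ₗ ρ = 0)
    (hlk : lam ∘ₗ κ = 0) (hκρ : κ ∘ₗ ρ = 0)
    (hD : D = d + δ) (hDD : D ∘ₗ D = 0)
    (hεl : εl = δ ∘ₗ κ') (hεr : εr = κ' ∘ₗ δ)
    (hκ'l : κ' = κ ∘ₗ (LinearMap.id + εl))
    (hκ'r : κ' = (LinearMap.id + εr) ∘ₗ κ)
    (hκ'κ' : κ' ∘ₗ κ' = 0)
    (hlam' : lam' = lam ∘ₗ (LinearMap.id + εl))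
    (hρ' : ρ' = (LinearMap.id + εr) ∘ₗ ρ) :
    (lam' ∘ₗ δ ∘ₗ ρ) ∘ₗ lam' = lam' ∘ₗ D ∧
      ρ' ∘ₗ (lam' ∘ₗ δ ∘ₗ ρ) = D ∘ₗ ρ' := by
  exact perturbation_chain_maps_general d κ δ κ' εl εr D lam lam' ρ ρ' h2 hdd hld hdρ hD hDD
    hεl hεr hκ'l hκ'r hlam' hρ'
end

section
/- ε_ρ ∘ ε_λ = −(κ' ∘ d ∘ ε_λ) − (ε_ρ ∘ d ∘ κ') as S-linear maps E → E. -/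
/-! Since `d² = 0`, the equation `(d + δ)² = 0` is the Maurer–Cartan equation `dδ + δd + δ² = 0`.
Composing it with `κ'` on both sides gives the identity. -/

theorem mul_self_eq_neg_mul_sub_mul_of_add_mul_self_eq_zero {R : Type*}
    [NonUnitalNonAssocRing R] {d δ : R} (hd : d * d = 0) (hD : (d + δ) * (d + δ) = 0) :
    δ * δ = -(d * δ) - δ * d := by
  have maurer_cartan : d * δ + δ * d + δ * δ = 0 := by
    rw [← hD, mul_add, add_mul, add_mul, hd, zero_add]
    abel
  rw [eq_neg_of_add_eq_zero_right maurer_cartan, neg_add']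

theorem perturbation_epsilon_identity_general
    {S E F G : Type*} [Semiring S] [AddCommGroup E] [Module S E]
    [AddCommMonoid F] [Module S F] [AddCommGroup G] [Module S G]
    {d δ : E →ₗ[S] E} {f εl : F →ₗ[S] E} {g εr : E →ₗ[S] G}
    (hd : d ∘ₗ d = 0) (hD : (d + δ) ∘ₗ (d + δ) = 0)
    (hεl : εl = δ ∘ₗ f) (hεr : εr = g ∘ₗ δ) :
    εr ∘ₗ εl = -(g ∘ₗ d ∘ₗ εl) - εr ∘ₗ d ∘ₗ f := by
  subst hεl hεr
  have hδ : δ ∘ₗ δ = -(d ∘ₗ δ) - δ ∘ₗ d :=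
    mul_self_eq_neg_mul_sub_mul_of_add_mul_self_eq_zero (R := Module.End S E) hd hD
  calc (g ∘ₗ δ) ∘ₗ δ ∘ₗ f
      = g ∘ₗ (δ ∘ₗ δ) ∘ₗ f := by simp only [LinearMap.comp_assoc]
    _ = g ∘ₗ (-(d ∘ₗ δ) - δ ∘ₗ d) ∘ₗ f := by rw [hδ]
    _ = -(g ∘ₗ d ∘ₗ δ ∘ₗ f) - (g ∘ₗ δ) ∘ₗ d ∘ₗ f := by
      simp only [LinearMap.sub_comp, LinearMap.neg_comp, LinearMap.comp_sub, LinearMap.comp_neg,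
        LinearMap.comp_assoc]

/-- The auxiliary identity `ε_ρ ∘ ε_λ = −κ' ∘ d ∘ ε_λ − ε_ρ ∘ d ∘ κ'` used in the proof
of the differential perturbation lemma. -/
theorem perturbation_epsilon_identity
    {S E H : Type*} [Ring S]
    [AddCommGroup E] [Module S E] [AddCommGroup H] [Module S H]
    (d κ δ κ' εl εr D : E →ₗ[S] E)
    (lam lam' : E →ₗ[S] H) (ρ ρ' : H →ₗ[S] E)
    (h1 : lam ∘ₗ ρ = LinearMap.id)
    (h2 : ρ ∘ₗ lam = LinearMap.id + d ∘ₗ κ + κ ∘ₗ d)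
    (hκκ : κ ∘ₗ κ = 0) (hdd : d ∘ₗ d = 0)
    (hld : lam ∘ₗ d = 0) (hdρ : d ∘ₗ ρ = 0)
    (hlk : lam ∘ₗ κ = 0) (hκρ : κ ∘ₗ ρ = 0)
    (hD : D = d + δ) (hDD : D ∘ₗ D = 0)
    (hεl : εl = δ ∘ₗ κ') (hεr : εr = κ' ∘ₗ δ)
    (hκ'l : κ' = κ ∘ₗ (LinearMap.id + εl))
    (hκ'r : κ' = (LinearMap.id + εr) ∘ₗ κ)
    (hκ'κ' : κ' ∘ₗ κ' = 0)
    (hlam' : lam' = lam ∘ₗ (LinearMap.id + εl))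
    (hρ' : ρ' = (LinearMap.id + εr) ∘ₗ ρ) :
    εr ∘ₗ εl = -(κ' ∘ₗ d ∘ₗ εl) - εr ∘ₗ d ∘ₗ κ' :=
  perturbation_epsilon_identity_general hdd (hD ▸ hDD) hεl hεr
end

section
/- There exist S-linear maps κ', ε_λ, ε_ρ : E → E (given by the then-convergent series κ' = κ + κδκ + κδκδκ + ⋯, ε_λ = Σ_{m≥1}(δκ)^m, ε_ρ = Σ_{m≥1}(κδ)^m) satisfying ε_λ = δ ∘ κ', ε_ρ = κ' ∘ δ, κ' = κ ∘ (id_E + ε_λ), κ' = (id_E + ε_ρ) ∘ κ, and κ' ∘ κ' = 0. -/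
/-!
For an endomorphism `N` such that every vector is killed by a power of `N`, the geometric series
`G N = 1 + N + N² + ⋯` is a finite sum at each vector, so it is a linear map with
`1 + N ∘ G N = G N`. It is natural in `N`: a linear map intertwining two such endomorphisms
intertwines their geometric series. Since `κ` intertwines `δκ` with `κδ`, the perturbed map can be
written in two ways, `κ' = κ ∘ G (δκ) = G (κδ) ∘ κ`. These give `1 + δκ' = G (δκ)` and
`1 + κ'δ = G (κδ)`, hence the two recursive formulas, and
`κ'κ' = G (κδ) ∘ (κ ∘ κ) ∘ G (δκ) = 0`.
-/

section

variable {R M P : Type*} [Semiring R] [AddCommMonoid M] [Module R M] [AddCommMonoid P] [Module R P]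

/-- Local nilpotence of an endomorphism: every vector is killed by some power. This is what makes
power series in the endomorphism converge pointwise. -/
def IsLocallyNilpotent (N : Module.End R M) : Prop :=
  ∀ x, ∃ m : ℕ, (N ^ m) x = 0

namespace IsLocallyNilpotent

variable {N : Module.End R M} {N' : Module.End R P}

theorem hasFiniteSupport_pow_apply (hN : IsLocallyNilpotent N) (x : M) :
    (fun i : ℕ ↦ (N ^ i) x).HasFiniteSupport := by
  obtain ⟨m, hm⟩ := hN x
  refine (Set.finite_Iio m).subset fun i hi ↦ ?_
  by_contra hmi
  exact hi (Module.End.pow_map_zero_of_le (not_lt.mp hmi) hm)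

/-- The geometric series `∑ Nⁱ` of a locally nilpotent endomorphism `N`, i.e. the inverse of `1 - N`
when subtraction is available. It is a pointwise `finsum`, whose terms have finite support by
`hasFiniteSupport_pow_apply`, so the default value `0` of `finsum` never intervenes. -/
noncomputable def geomSum (hN : IsLocallyNilpotent N) : Module.End R M where
  toFun x := ∑ᶠ i : ℕ, (N ^ i) x
  map_add' x y := by
    simp only [map_add]
    exact finsum_add_distrib (hN.hasFiniteSupport_pow_apply x) (hN.hasFiniteSupport_pow_apply y)
  map_smul' c x := by
    simp only [map_smul, RingHom.id_apply]
    exact (smul_finsum' c (hN.hasFiniteSupport_pow_apply x)).symm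

theorem geomSum_apply (hN : IsLocallyNilpotent N) (x : M) :
    hN.geomSum x = ∑ᶠ i : ℕ, (N ^ i) x :=
  rfl

theorem eventually_sum_pow_apply_eq (hN : IsLocallyNilpotent N) (x : M) :
    ∀ᶠ n in Filter.atTop, ∑ i ∈ Finset.range n, (N ^ i) x = hN.geomSum x := by
  obtain ⟨m, hm⟩ := hN x
  filter_upwards [Filter.eventually_ge_atTop m] with n hmn
  refine (finsum_eq_sum_of_support_subset _ fun i hi ↦ ?_).symm
  rw [Finset.coe_range, Set.mem_Iio]
  by_contra! hni
  exact hi (Module.End.pow_map_zero_of_le (hmn.trans hni) hm)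

theorem eventually_sum_pow_succ_apply_eq (hN : IsLocallyNilpotent N) (x : M) :
    ∀ᶠ n in Filter.atTop, ∑ i ∈ Finset.range n, (N ^ (i + 1)) x = N (hN.geomSum x) := by
  filter_upwards [hN.eventually_sum_pow_apply_eq x] with n hn
  simp only [← hn, map_sum, pow_succ', Module.End.mul_apply]

theorem id_add_comp_geomSum (hN : IsLocallyNilpotent N) :
    LinearMap.id + N ∘ₗ hN.geomSum = hN.geomSum := by
  ext x
  obtain ⟨n, hn, hn_succ⟩ := ((hN.eventually_sum_pow_succ_apply_eq x).and
    ((Filter.tendsto_add_atTop_nat 1).eventually (hN.eventually_sum_pow_apply_eq x))).exists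
  calc x + N (hN.geomSum x) = (N ^ 0) x + ∑ i ∈ Finset.range n, (N ^ (i + 1)) x := by
        rw [hn, pow_zero, Module.End.one_apply]
    _ = ∑ i ∈ Finset.range (n + 1), (N ^ i) x := by rw [Finset.sum_range_succ', add_comm]
    _ = hN.geomSum x := hn_succ

theorem geomSum_comp_eq_comp_geomSum (hN : IsLocallyNilpotent N) (hN' : IsLocallyNilpotent N')
    {f : M →ₗ[R] P} (hf : N' ∘ₗ f = f ∘ₗ N) : hN'.geomSum ∘ₗ f = f ∘ₗ hN.geomSum := by
  ext x
  have hpow (i : ℕ) : (N' ^ i) (f x) = f ((N ^ i) x) :=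
    LinearMap.congr_fun (Module.End.commute_pow_left_of_commute hf i) x
  simp only [LinearMap.comp_apply, geomSum_apply, hpow]
  exact (map_finsum f (hN.hasFiniteSupport_pow_apply x)).symm

theorem comp_swap {f : M →ₗ[R] P} {g : P →ₗ[R] M} (h : IsLocallyNilpotent (g ∘ₗ f)) :
    IsLocallyNilpotent (f ∘ₗ g) := by
  intro y
  obtain ⟨m, hm⟩ := h (g y)
  have hpow : ((g ∘ₗ f : Module.End R M) ^ m) (g y) = g (((f ∘ₗ g : Module.End R P) ^ m) y) :=
    LinearMap.congr_fun (Module.End.commute_pow_left_of_commute (LinearMap.comp_assoc g f g) m) y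
  refine ⟨m + 1, ?_⟩
  rw [pow_succ', Module.End.mul_apply, LinearMap.comp_apply, ← hpow, hm, map_zero]

theorem geomSum_comp_swap {f : M →ₗ[R] P} {g : P →ₗ[R] M} (h : IsLocallyNilpotent (g ∘ₗ f)) :
    h.comp_swap.geomSum ∘ₗ f = f ∘ₗ h.geomSum :=
  h.geomSum_comp_eq_comp_geomSum h.comp_swap (LinearMap.comp_assoc f g f)

end IsLocallyNilpotent

end

theorem perturbation_series_exists_general
    {S E : Type*} [Semiring S] [AddCommMonoid E] [Module S E] (κ δ : E →ₗ[S] E)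
    (hκκ : κ ∘ₗ κ = 0) (hnil : IsLocallyNilpotent (δ ∘ₗ κ)) :
    ∃ κ' εl εr : E →ₗ[S] E,
      (∀ e, ∀ᶠ n in Filter.atTop,
        ∑ m ∈ Finset.range n, κ (((δ ∘ₗ κ : Module.End S E) ^ m) e) = κ' e) ∧
      (∀ e, ∀ᶠ n in Filter.atTop,
        ∑ m ∈ Finset.range n, ((δ ∘ₗ κ : Module.End S E) ^ (m + 1)) e = εl e) ∧
      (∀ e, ∀ᶠ n in Filter.atTop,
        ∑ m ∈ Finset.range n, ((κ ∘ₗ δ : Module.End S E) ^ (m + 1)) e = εr e) ∧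
      εl = δ ∘ₗ κ' ∧ εr = κ' ∘ₗ δ ∧
      κ' = κ ∘ₗ (LinearMap.id + εl) ∧
      κ' = (LinearMap.id + εr) ∘ₗ κ ∧
      κ' ∘ₗ κ' = 0 := by
  have hnil' : IsLocallyNilpotent (κ ∘ₗ δ) := hnil.comp_swap
  have hκ : hnil'.geomSum ∘ₗ κ = κ ∘ₗ hnil.geomSum := hnil.geomSum_comp_swap
  have hδ : hnil.geomSum ∘ₗ δ = δ ∘ₗ hnil'.geomSum := hnil'.geomSum_comp_swap
  have hεr : (κ ∘ₗ hnil.geomSum) ∘ₗ δ = (κ ∘ₗ δ) ∘ₗ hnil'.geomSum := by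
    rw [LinearMap.comp_assoc, hδ, LinearMap.comp_assoc]
  refine ⟨κ ∘ₗ hnil.geomSum, (δ ∘ₗ κ) ∘ₗ hnil.geomSum, (κ ∘ₗ δ) ∘ₗ hnil'.geomSum, fun e ↦ ?_,
    hnil.eventually_sum_pow_succ_apply_eq, hnil'.eventually_sum_pow_succ_apply_eq,
    LinearMap.comp_assoc .., hεr.symm, ?_, ?_, ?_⟩
  · filter_upwards [hnil.eventually_sum_pow_apply_eq e] with n hn
    rw [LinearMap.comp_apply, ← hn, map_sum]
  · rw [hnil.id_add_comp_geomSum]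
  · rw [hnil'.id_add_comp_geomSum, hκ]
  · calc (κ ∘ₗ hnil.geomSum) ∘ₗ (κ ∘ₗ hnil.geomSum)
        = (hnil'.geomSum ∘ₗ κ) ∘ₗ (κ ∘ₗ hnil.geomSum) := by rw [hκ]
      _ = hnil'.geomSum ∘ₗ (κ ∘ₗ κ) ∘ₗ hnil.geomSum := by simp only [LinearMap.comp_assoc]
      _ = 0 := by rw [hκκ, LinearMap.zero_comp, LinearMap.comp_zero]

/-- Convergence of the perturbation series: if `δ ∘ κ` is locally nilpotent, then there exist
linear maps `κ' = κ + κδκ + κδκδκ + ⋯`, `ε_λ = Σ_{m≥1} (δκ)^m`, `ε_ρ = Σ_{m≥1} (κδ)^m`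
satisfying the closed-form equations `ε_λ = δ ∘ κ'`, `ε_ρ = κ' ∘ δ`,
`κ' = κ ∘ (id + ε_λ)`, `κ' = (id + ε_ρ) ∘ κ`, and `κ' ∘ κ' = 0`. -/
theorem perturbation_series_exists
    {S E H : Type*} [Ring S]
    [AddCommGroup E] [Module S E] [AddCommGroup H] [Module S H]
    (d κ δ : E →ₗ[S] E)
    (lam : E →ₗ[S] H) (ρ : H →ₗ[S] E)
    (h1 : lam ∘ₗ ρ = LinearMap.id)
    (h2 : ρ ∘ₗ lam = LinearMap.id + d ∘ₗ κ + κ ∘ₗ d)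
    (hκκ : κ ∘ₗ κ = 0) (hdd : d ∘ₗ d = 0)
    (hld : lam ∘ₗ d = 0) (hdρ : d ∘ₗ ρ = 0)
    (hlk : lam ∘ₗ κ = 0) (hκρ : κ ∘ₗ ρ = 0)
    (hnil : ∀ e : E, ∃ m : ℕ, ((δ ∘ₗ κ : Module.End S E) ^ m) e = 0) :
    ∃ κ' εl εr : E →ₗ[S] E,
      εl = δ ∘ₗ κ' ∧ εr = κ' ∘ₗ δ ∧
      κ' = κ ∘ₗ (LinearMap.id + εl) ∧
      κ' = (LinearMap.id + εr) ∘ₗ κ ∧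
      κ' ∘ₗ κ' = 0 := by
  obtain ⟨κ', εl, εr, -, -, -, h⟩ := perturbation_series_exists_general κ δ hκκ hnil
  exact ⟨κ', εl, εr, h⟩
end

section
/- Every Lie subalgebra of a free Lie algebra is itself a free Lie algebra: for every Lie subalgebra L of the free Lie algebra FreeLieAlgebra K X on a type X, there exists a type Y and an isomorphism of Lie algebras over K between L and the free Lie algebra FreeLieAlgebra K Y. -/
/-!
In characteristic zero the free Lie algebra sits in the free associative algebra `T` as its space of
primitive elements: the Dynkin operator, divided by the degree, is a retraction of `T` onto it.

The leading terms of the elements of a Lie subalgebra `L` generate a left ideal `J` of `T`. By a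
graded form of Nakayama's lemma and the Fox derivatives, some family `b` of leading terms is a basis
of `J` as a left `T`-module. Then `b` freely generates a subalgebra of `T`. That subalgebra contains
every element `a` whose coproduct is `a ⊗ 1` modulo `T ⊗ J`: the counit turns this condition into
`a - ε a ∈ J`, and the condition passes to the coordinates of `a - ε a` in the basis `b`, which have
smaller degree. In particular every leading term of `L` is a polynomial in `b`, and being primitive
it is a Lie polynomial in `b`. Elements of `L` with leading terms `b` therefore generate `L`, by
induction on the degree, and they are free because their leading terms are.
-/

universe u v

noncomputable section

namespace ShirshovWitt

open Module
open scoped TensorProduct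

attribute [local instance] LieRing.ofAssociativeRing

/-! ### Words and weights in the free associative algebra -/

section Words

variable {R : Type*} [CommSemiring R] {X : Type*}

variable (R X) in
/-- The basis of the free associative algebra consisting of the words in the letters `X`. -/
def word : Basis (List X) R (FreeAlgebra R X) :=
  (FreeAlgebra.basisFreeMonoid R X).reindex FreeMonoid.toList

@[simp] lemma word_nil : word R X [] = 1 := by
  simp only [word, FreeAlgebra.basisFreeMonoid, Basis.reindex_apply, Basis.map_apply,
    FreeMonoid.toList_symm, FreeMonoid.ofList_nil]
  simp [← MonoidAlgebra.one_def]

lemma word_singleton (x : X) : word R X [x] = FreeAlgebra.ι R x := by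
  simp only [word, FreeAlgebra.basisFreeMonoid, Basis.reindex_apply, Basis.map_apply,
    FreeMonoid.toList_symm, FreeMonoid.ofList_singleton]
  simp [FreeAlgebra.equivMonoidAlgebraFreeMonoid]

@[simp] lemma word_append (u w : List X) : word R X (u ++ w) = word R X u * word R X w := by
  simp [word, FreeAlgebra.basisFreeMonoid, ← map_mul, MonoidAlgebra.single_mul_single]

@[simp] lemma word_cons (x : X) (w : List X) :
    word R X (x :: w) = FreeAlgebra.ι R x * word R X w := by
  rw [← word_singleton, ← word_append, List.singleton_append]

/-- The weight of a word, when each letter `x` has weight `d x`. -/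
def weight (d : X → ℕ) (w : List X) : ℕ := (w.map d).sum

@[simp] lemma weight_nil (d : X → ℕ) : weight d [] = 0 := rfl

@[simp] lemma weight_cons (d : X → ℕ) (x : X) (w : List X) :
    weight d (x :: w) = d x + weight d w := by
  simp [weight]

@[simp] lemma weight_append (d : X → ℕ) (u w : List X) :
    weight d (u ++ w) = weight d u + weight d w := by
  simp [weight]

variable (R) in
/-- The span of the words whose weight lies in `s`. In particular `weightPart R d {n}` is the
homogeneous component of degree `n`, and `weightPart R d (Set.Iio n)` consists of the elements of
degree less than `n`. -/
def weightPart (d : X → ℕ) (s : Set ℕ) : Submodule R (FreeAlgebra R X) :=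
  Submodule.span R (word R X '' {w | weight d w ∈ s})

variable {d : X → ℕ} {s t : Set ℕ} {a b : FreeAlgebra R X}

lemma mem_weightPart :
    a ∈ weightPart R d s ↔ ∀ w, (word R X).repr a w ≠ 0 → weight d w ∈ s := by
  simp [weightPart, Basis.mem_span_image, Set.subset_def]

lemma word_mem_weightPart {w : List X} (h : weight d w ∈ s) : word R X w ∈ weightPart R d s :=
  Submodule.subset_span ⟨w, h, rfl⟩

lemma ι_mem_weightPart (d : X → ℕ) (x : X) : FreeAlgebra.ι R x ∈ weightPart R d {d x} := by
  rw [← word_singleton]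
  exact word_mem_weightPart (by simp)

lemma weightPart_mono (h : s ⊆ t) : weightPart R d s ≤ weightPart R d t :=
  Submodule.span_mono (Set.image_mono fun _ hw => h hw)

lemma weightPart_Iio_zero : weightPart R d (Set.Iio 0) = ⊥ := by
  simp [weightPart]

lemma weightPart_mul_le {r : Set ℕ} (h : ∀ i ∈ s, ∀ j ∈ t, i + j ∈ r) :
    weightPart R d s * weightPart R d t ≤ weightPart R d r := by
  rw [weightPart, weightPart, Submodule.span_mul_span, Submodule.span_le]
  rintro _ ⟨_, ⟨u, hu, rfl⟩, _, ⟨w, hw, rfl⟩, rfl⟩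
  simp only [← word_append]
  exact word_mem_weightPart (by simpa using h _ hu _ hw)

lemma mul_mem_weightPart {r : Set ℕ} (h : ∀ i ∈ s, ∀ j ∈ t, i + j ∈ r)
    (ha : a ∈ weightPart R d s) (hb : b ∈ weightPart R d t) : a * b ∈ weightPart R d r :=
  weightPart_mul_le h (Submodule.mul_mem_mul ha hb)

lemma exists_mem_weightPart_Iio (d : X → ℕ) (a : FreeAlgebra R X) :
    ∃ n, a ∈ weightPart R d (Set.Iio n) :=
  ⟨((word R X).repr a).support.sup (weight d) + 1, mem_weightPart.2 fun _ hw =>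
    Nat.lt_succ_of_le (Finset.le_sup (f := weight d) (Finsupp.mem_support_iff.2 hw))⟩

/-- The diagonal operator multiplying a word of weight `n` by `c n`. It specializes to the Euler
operator, to its partial inverse and to the projections onto the spaces `weightPart R d s`. -/
def diag (d : X → ℕ) (c : ℕ → R) : FreeAlgebra R X →ₗ[R] FreeAlgebra R X :=
  (word R X).constr R fun w => c (weight d w) • word R X w

@[simp] lemma diag_word (d : X → ℕ) (c : ℕ → R) (w : List X) :
    diag d c (word R X w) = c (weight d w) • word R X w := by
  simp [diag]

lemma repr_diag (d : X → ℕ) (c : ℕ → R) (a : FreeAlgebra R X) (w : List X) :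
    (word R X).repr (diag d c a) w = c (weight d w) * (word R X).repr a w := by
  classical
  have : (word R X).coord w ∘ₗ diag d c = c (weight d w) • (word R X).coord w := by
    refine (word R X).ext fun u => ?_
    by_cases h : u = w <;> simp [h]
  exact LinearMap.congr_fun this a

lemma diag_of_mem {c : ℕ → R} {n : ℕ} (h : a ∈ weightPart R d {n}) : diag d c a = c n • a := by
  refine (word R X).ext_elem fun w => ?_
  rw [repr_diag, map_smul, Finsupp.smul_apply, smul_eq_mul]
  by_cases hw : (word R X).repr a w = 0
  · simp [hw]
  · rw [mem_weightPart.1 h w hw]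

/-- The projection onto `weightPart R d s` along the words of other weights. -/
def proj (d : X → ℕ) (s : Set ℕ) : FreeAlgebra R X →ₗ[R] FreeAlgebra R X :=
  diag d (s.indicator 1)

open Classical in
lemma proj_word (d : X → ℕ) (s : Set ℕ) (w : List X) :
    proj d s (word R X w) = if weight d w ∈ s then word R X w else 0 := by
  simp [proj, Set.indicator_apply]

open Classical in
lemma repr_proj (d : X → ℕ) (s : Set ℕ) (a : FreeAlgebra R X) (w : List X) :
    (word R X).repr (proj d s a) w = if weight d w ∈ s then (word R X).repr a w else 0 := by
  simp [proj, repr_diag, Set.indicator_apply]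

lemma proj_mem (d : X → ℕ) (s : Set ℕ) (a : FreeAlgebra R X) :
    proj d s a ∈ weightPart R d s := by
  classical
  refine mem_weightPart.2 fun w hw => ?_
  rw [repr_proj] at hw
  exact (ite_ne_right_iff.1 hw).1

lemma proj_eq_self (h : a ∈ weightPart R d s) : proj d s a = a := by
  classical
  refine (word R X).ext_elem fun w => ?_
  rw [repr_proj, ite_eq_left_iff]
  exact fun hw => (not_imp_comm.1 (mem_weightPart.1 h w) hw).symm

lemma proj_eq_zero (hst : Disjoint s t) (h : a ∈ weightPart R d t) : proj d s a = 0 := by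
  classical
  refine (word R X).ext_elem fun w => ?_
  rw [repr_proj, map_zero, Finsupp.zero_apply, ite_eq_right_iff]
  exact fun hw => not_imp_comm.1 (mem_weightPart.1 h w) (hst.notMem_of_mem_left hw)

lemma eq_zero_of_mem_weightPart (hst : Disjoint s t) (hs : a ∈ weightPart R d s)
    (ht : a ∈ weightPart R d t) : a = 0 :=
  (proj_eq_self hs).symm.trans (proj_eq_zero hst ht)

lemma proj_mul {n : ℕ} (hb : b ∈ weightPart R d {n}) (s : Set ℕ) (a : FreeAlgebra R X) :
    proj d s (a * b) = proj d {i | i + n ∈ s} a * b := by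
  classical
  have : proj d s ∘ₗ LinearMap.mulRight R b =
      LinearMap.mulRight R b ∘ₗ proj d {i | i + n ∈ s} := by
    refine (word R X).ext fun w => ?_
    have hwb : word R X w * b ∈ weightPart R d {weight d w + n} :=
      mul_mem_weightPart (by simp) (word_mem_weightPart (Set.mem_singleton _)) hb
    simp only [LinearMap.comp_apply, LinearMap.mulRight_apply, proj_word, Set.mem_ofPred_eq]
    split_ifs with hw
    · exact proj_eq_self (weightPart_mono (Set.singleton_subset_iff.2 hw) hwb)
    · rw [zero_mul]
      exact proj_eq_zero (Set.disjoint_singleton_right.2 hw) hwb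
  exact LinearMap.congr_fun this a

end Words

lemma sub_proj_mem {R : Type*} [CommRing R] {X : Type*} {d : X → ℕ} {s t : Set ℕ}
    {a : FreeAlgebra R X} (h : a ∈ weightPart R d t) : a - proj d s a ∈ weightPart R d (t \ s) := by
  classical
  refine mem_weightPart.2 fun w hw => ?_
  rw [map_sub, Finsupp.sub_apply, repr_proj] at hw
  split_ifs at hw with hws
  · exact absurd (sub_self _) hw
  · exact ⟨mem_weightPart.1 h w (by rwa [sub_zero] at hw), hws⟩

/-! ### The bialgebra structure of the free associative algebra -/

section Bialgebra

variable {R : Type*} [CommSemiring R] {X : Type*}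

/-- The bialgebra structure on the free associative algebra for which the letters are primitive. -/
instance : Bialgebra R (FreeAlgebra R X) :=
  .ofAlgHom (FreeAlgebra.lift R fun x => FreeAlgebra.ι R x ⊗ₜ 1 + 1 ⊗ₜ FreeAlgebra.ι R x)
    FreeAlgebra.algebraMapInv
    (by
      ext x
      simp [Algebra.TensorProduct.one_def, TensorProduct.add_tmul, TensorProduct.tmul_add]
      abel)
    (by ext x; simp [FreeAlgebra.algebraMapInv])
    (by ext x; simp [FreeAlgebra.algebraMapInv])

@[simp] lemma comul_ι (x : X) : Coalgebra.comul (R := R) (FreeAlgebra.ι R x) =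
    FreeAlgebra.ι R x ⊗ₜ 1 + 1 ⊗ₜ FreeAlgebra.ι R x :=
  FreeAlgebra.lift_ι_apply _ x

@[simp] lemma counit_ι (x : X) : Coalgebra.counit (R := R) (FreeAlgebra.ι R x) = 0 :=
  FreeAlgebra.lift_ι_apply _ x

lemma repr_nil (a : FreeAlgebra R X) : (word R X).repr a [] = Coalgebra.counit (R := R) a := by
  have : (word R X).coord [] = Coalgebra.counit := by
    refine (word R X).ext fun w => ?_
    cases w with
    | nil => rw [Basis.coord_apply, Basis.repr_self]; simp
    | cons x w => rw [Basis.coord_apply, Basis.repr_self]; simp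
  exact LinearMap.congr_fun this a

lemma mem_weightPart_Ici_one {a : FreeAlgebra R X} :
    a ∈ weightPart R 1 (Set.Ici 1) ↔ Coalgebra.counit (R := R) a = 0 := by
  rw [mem_weightPart, ← repr_nil]
  constructor
  · intro h
    by_contra hne
    simpa using h [] hne
  · rintro h (_ | ⟨x, w⟩) hw
    · exact absurd h hw
    · simp

end Bialgebra

/-! ### Fox derivatives and left ideals of the free associative algebra -/

section FoxDerivative

variable {R : Type*} [CommSemiring R] {X : Type*}

/-- The Fox derivative along the letter `x`: it removes a first letter `x`, and sends the words
that do not begin with `x` to zero. -/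
def foxDeriv (x : X) : FreeAlgebra R X →ₗ[R] FreeAlgebra R X :=
  (word R X).repr.symm.toLinearMap ∘ₗ Finsupp.lcomapDomain (x :: ·) (List.cons_injective) ∘ₗ
    (word R X).repr.toLinearMap

lemma repr_foxDeriv (x : X) (a : FreeAlgebra R X) (w : List X) :
    (word R X).repr (foxDeriv x a) w = (word R X).repr a (x :: w) := by
  simp [foxDeriv, Finsupp.lcomapDomain]

lemma foxDeriv_one (x : X) : foxDeriv x (1 : FreeAlgebra R X) = 0 := by
  refine (word R X).ext_elem fun w => ?_
  rw [repr_foxDeriv, ← word_nil, Basis.repr_self]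
  simp

open Classical in
lemma foxDeriv_ι_mul (x y : X) (a : FreeAlgebra R X) :
    foxDeriv x (FreeAlgebra.ι R y * a) = if y = x then a else 0 := by
  have : foxDeriv x ∘ₗ LinearMap.mulLeft R (FreeAlgebra.ι R y) =
      if y = x then LinearMap.id else 0 := by
    refine (word R X).ext fun u => (word R X).ext_elem fun w => ?_
    rw [LinearMap.comp_apply, LinearMap.mulLeft_apply, ← word_cons, repr_foxDeriv,
      Basis.repr_self]
    by_cases h : y = x <;> simp [h, Finsupp.single_apply]
  have := LinearMap.congr_fun this a
  rw [LinearMap.comp_apply, LinearMap.mulLeft_apply] at this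
  rw [this]
  split_ifs <;> rfl

lemma foxDeriv_mul (x : X) (a b : FreeAlgebra R X) :
    foxDeriv x (a * b) = foxDeriv x a * b + Coalgebra.counit (R := R) a • foxDeriv x b := by
  classical
  have : foxDeriv x ∘ₗ LinearMap.mulRight R b =
      LinearMap.mulRight R b ∘ₗ foxDeriv x +
        (Coalgebra.counit (R := R)).smulRight (foxDeriv x b) := by
    refine (word R X).ext fun w => ?_
    cases w with
    | nil => simp [foxDeriv_one]
    | cons y w => simp [mul_assoc, foxDeriv_ι_mul]
  exact LinearMap.congr_fun this a

end FoxDerivative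

lemma le_sup_pow_mul {R A : Type*} [CommSemiring R] [Semiring A] [Algebra R A] {J : Ideal A}
    {I V : Submodule R A} (h : V ≤ J.restrictScalars R ⊔ I * V) (n : ℕ) :
    V ≤ J.restrictScalars R ⊔ I ^ n * V := by
  have mul_le (N : Submodule R A) : N * J.restrictScalars R ≤ J.restrictScalars R :=
    Submodule.mul_le.2 fun a _ _ hp => J.mul_mem_left a hp
  induction n with
  | zero => simp
  | succ n ih =>
    calc V ≤ J.restrictScalars R ⊔ I ^ n * V := ih
      _ ≤ J.restrictScalars R ⊔ I ^ n * (J.restrictScalars R ⊔ I * V) :=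
        sup_le_sup_left (mul_le_mul_right h _) _
      _ = J.restrictScalars R ⊔ I ^ n * J.restrictScalars R ⊔ I ^ (n + 1) * V := by
        rw [Submodule.mul_sup, ← mul_assoc, ← pow_succ, sup_assoc]
      _ ≤ J.restrictScalars R ⊔ I ^ (n + 1) * V :=
        sup_le_sup_right (sup_le le_rfl (mul_le _)) _

section LeftIdeal

variable {R : Type*} [CommRing R] {X Y ι : Type*} {d : X → ℕ} {e : Y → ℕ}
  {b : Y → FreeAlgebra R X}

lemma counit_eq_zero_of_linearCombination_eq_zero {V : Submodule R (FreeAlgebra R X)}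
    (hb : ∀ j, b j ∈ V)
    (h : LinearIndependent R ((weightPart R 1 (Set.Ici 1) * V).mkQ ∘ b))
    {c : Y →₀ FreeAlgebra R X} (hc : Finsupp.linearCombination (FreeAlgebra R X) b c = 0) (j : Y) :
    Coalgebra.counit (R := R) (c j) = 0 := by
  have hsum : (weightPart R 1 (Set.Ici 1) * V).mkQ
      (∑ j ∈ c.support, Coalgebra.counit (R := R) (c j) • b j) = 0 := by
    rw [Submodule.mkQ_apply, Submodule.Quotient.mk_eq_zero, ← sub_zero (∑ j ∈ c.support, _), ← hc,
      Finsupp.linearCombination_apply, Finsupp.sum, ← Finset.sum_sub_distrib]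
    refine sum_mem fun j _ => ?_
    rw [smul_eq_mul, Algebra.smul_def, ← sub_mul]
    exact Submodule.mul_mem_mul (mem_weightPart_Ici_one.2 (by simp)) (hb j)
  have := linearIndependent_iff.1 h (c.mapRange (Coalgebra.counit (R := R)) (map_zero _)) (by
    rw [Finsupp.linearCombination_apply, Finsupp.sum_mapRange_index (by simp)]
    simpa only [map_sum, map_smul, Finsupp.sum, Function.comp_apply] using hsum)
  simpa using DFunLike.congr_fun this j

/-- As the coefficients of a relation have no constant term, their Fox derivatives are the
coefficients of another relation. -/
lemma linearIndependent_of_mkQ {V : Submodule R (FreeAlgebra R X)} (hb : ∀ j, b j ∈ V)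
    (h : LinearIndependent R ((weightPart R 1 (Set.Ici 1) * V).mkQ ∘ b)) :
    LinearIndependent (FreeAlgebra R X) b := by
  have repr_eq_zero (w : List X) : ∀ c : Y →₀ FreeAlgebra R X,
      Finsupp.linearCombination (FreeAlgebra R X) b c = 0 → ∀ j, (word R X).repr (c j) w = 0 := by
    induction w with
    | nil =>
      intro c hc j
      rw [repr_nil, counit_eq_zero_of_linearCombination_eq_zero hb h hc]
    | cons x w ih =>
      intro c hc j
      have := ih (c.mapRange (foxDeriv x) (map_zero _)) (by
        rw [← map_zero (foxDeriv x), ← hc, Finsupp.linearCombination_apply,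
          Finsupp.linearCombination_apply, Finsupp.sum_mapRange_index (by simp), Finsupp.sum,
          Finsupp.sum, map_sum]
        refine Finset.sum_congr rfl fun j _ => ?_
        rw [smul_eq_mul, smul_eq_mul, foxDeriv_mul,
          counit_eq_zero_of_linearCombination_eq_zero hb h hc, zero_smul, add_zero]) j
      rwa [Finsupp.mapRange_apply, repr_foxDeriv] at this
  refine linearIndependent_iff.2 fun c hc => Finsupp.ext fun j => (word R X).ext_elem fun w => ?_
  rw [repr_eq_zero w c hc, Finsupp.zero_apply, map_zero, Finsupp.zero_apply]

lemma exists_linearCombination_eq_proj (hb : ∀ j, b j ∈ weightPart R d {e j})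
    {a : FreeAlgebra R X} (ha : a ∈ Ideal.span (Set.range b)) (s : Set ℕ) :
    ∃ c : Y →₀ FreeAlgebra R X, (∀ j, c j ∈ weightPart R d {i | i + e j ∈ s}) ∧
      Finsupp.linearCombination (FreeAlgebra R X) b c = proj d s a := by
  obtain ⟨c, rfl⟩ := Finsupp.mem_span_range_iff_exists_finsupp.1 ha
  refine ⟨Finsupp.onFinset c.support (fun j => proj d {i | i + e j ∈ s} (c j)) fun j hj => ?_,
    fun j => proj_mem _ _ _, ?_⟩
  · rw [Finsupp.mem_support_iff]
    exact fun hcj => hj (by rw [hcj, map_zero])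
  · rw [Finsupp.linearCombination_apply, Finsupp.onFinset_sum _ (by simp), Finsupp.sum, map_sum]
    exact Finset.sum_congr rfl fun j _ => (proj_mul (hb j) s (c j)).symm

lemma proj_mem_span (hb : ∀ j, b j ∈ weightPart R d {e j}) {a : FreeAlgebra R X}
    (ha : a ∈ Ideal.span (Set.range b)) (s : Set ℕ) : proj d s a ∈ Ideal.span (Set.range b) := by
  obtain ⟨c, -, hc⟩ := exists_linearCombination_eq_proj hb ha s
  exact Finsupp.mem_span_range_iff_exists_finsupp.2 ⟨c, hc⟩

lemma weightPart_Ici_one_pow_le (d : X → ℕ) (n : ℕ) :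
    weightPart R d (Set.Ici 1) ^ n ≤ weightPart R d (Set.Ici n) := by
  induction n with
  | zero =>
    rw [pow_zero, Submodule.one_le, ← word_nil]
    exact word_mem_weightPart (Set.mem_Ici.2 (Nat.zero_le _))
  | succ n ih =>
    rw [pow_succ]
    exact (mul_le_mul_left ih _).trans
      (weightPart_mul_le fun i hi j hj => add_le_add (Set.mem_Ici.1 hi) (Set.mem_Ici.1 hj))

/-- A graded form of Nakayama's lemma. -/
lemma mem_span_of_le_sup_mul {v : ι → FreeAlgebra R X} {k : ι → ℕ}
    (hb : ∀ j, b j ∈ weightPart R d {e j}) (hv : ∀ i, v i ∈ weightPart R d {k i})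
    (h : Submodule.span R (Set.range v) ≤ (Ideal.span (Set.range b)).restrictScalars R ⊔
      weightPart R d (Set.Ici 1) * Submodule.span R (Set.range v)) (i : ι) :
    v i ∈ Ideal.span (Set.range b) := by
  obtain ⟨p, hp, q, hq, hpq⟩ := Submodule.mem_sup.1
    (le_sup_pow_mul h (k i + 1) (Submodule.subset_span ⟨i, rfl⟩))
  have hv_univ : Submodule.span R (Set.range v) ≤ weightPart R d Set.univ :=
    Submodule.span_le.2 (by
      rintro _ ⟨i, rfl⟩
      exact weightPart_mono (Set.subset_univ _) (hv i))
  have hq' : q ∈ weightPart R d (Set.Ici (k i + 1)) :=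
    (mul_le_mul' (weightPart_Ici_one_pow_le d _) hv_univ).trans
      (weightPart_mul_le fun m hm n _ => (Set.mem_Ici.1 hm).trans (Nat.le_add_right m n)) hq
  have hdisj : Disjoint {k i} (Set.Ici (k i + 1)) := by simp
  rw [← proj_eq_self (hv i), ← hpq, map_add, proj_eq_zero hdisj hq', add_zero]
  exact proj_mem_span hb hp _

end LeftIdeal

lemma exists_linearIndependent_subfamily {K X : Type*} {ι : Type v} [Field K]
    {v : ι → FreeAlgebra K X} {k : ι → ℕ} (hv : ∀ i, v i ∈ weightPart K 1 {k i}) :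
    ∃ (Y : Type v) (a : Y → ι), LinearIndependent (FreeAlgebra K X) (v ∘ a) ∧
      ∀ i, v i ∈ Ideal.span (Set.range (v ∘ a)) := by
  set V := Submodule.span K (Set.range v)
  set W := weightPart K 1 (Set.Ici 1) * V
  obtain ⟨Y, a, -, hspan, hind⟩ := exists_linearIndependent' K (W.mkQ ∘ v)
  have hvV (j : Y) : (v ∘ a) j ∈ V := Submodule.subset_span (Set.mem_range_self (a j))
  refine ⟨Y, a, linearIndependent_of_mkQ hvV hind,
    mem_span_of_le_sup_mul (fun j => hv (a j)) hv ?_⟩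
  have hVW : V ≤ Submodule.span K (Set.range (v ∘ a)) ⊔ W := by
    rw [Function.comp_assoc, Set.range_comp W.mkQ, Set.range_comp W.mkQ, ← Submodule.map_span,
      ← Submodule.map_span] at hspan
    rw [sup_comm, ← Submodule.comap_map_mkQ, hspan]
    exact Submodule.le_comap_map _ _
  exact hVW.trans (sup_le_sup_right (Submodule.span_le_restrictScalars K (FreeAlgebra K X) _) _)

lemma sub_counit_mem_span_ι {R X : Type*} [CommRing R] (a : FreeAlgebra R X) :
    a - algebraMap R _ (Coalgebra.counit (R := R) a) ∈
      Ideal.span (Set.range (FreeAlgebra.ι R : X → FreeAlgebra R X)) := by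
  induction a using FreeAlgebra.induction with
  | grade0 r => simp
  | grade1 x => simpa using Ideal.subset_span (Set.mem_range_self x)
  | mul a b ha hb =>
    rw [Bialgebra.counit_mul, map_mul]
    convert add_mem (Ideal.mul_mem_left _ a hb)
      (Ideal.mul_mem_left _ (algebraMap R _ (Coalgebra.counit (R := R) b)) ha) using 1
    rw [mul_sub, mul_sub, Algebra.commutes _ a, Algebra.commutes _ (algebraMap R _ _)]
    abel
  | add a b ha hb =>
    rw [map_add, map_add, add_sub_add_comm]
    exact add_mem ha hb

lemma lift_injective_of_linearIndependent {R A Y : Type*} [CommRing R] [Ring A] [Algebra R A]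
    (ε : A →ₐ[R] R) {b : Y → A} (hε : ∀ j, ε (b j) = 0) (hb : LinearIndependent A b) :
    Function.Injective (FreeAlgebra.lift R b) := by
  have hcounit (s : FreeAlgebra R Y) :
      ε (FreeAlgebra.lift R b s) = Coalgebra.counit (R := R) s := by
    have : ε.comp (FreeAlgebra.lift R b) = Bialgebra.counitAlgHom R (FreeAlgebra R Y) := by
      ext j
      simp [hε]
    exact AlgHom.congr_fun this s
  have eq_zero (n : ℕ) :
      ∀ s ∈ weightPart R (1 : Y → ℕ) (Set.Iio n), FreeAlgebra.lift R b s = 0 → s = 0 := by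
    induction n with
    | zero => exact fun s hs _ => (Submodule.mem_bot R).1 (weightPart_Iio_zero.le hs)
    | succ n ih =>
      intro s hs h0
      have hs_span : s ∈ Ideal.span (Set.range (FreeAlgebra.ι R : Y → FreeAlgebra R Y)) := by
        simpa [← hcounit, h0] using sub_counit_mem_span_ι s
      obtain ⟨c, hc, hcs⟩ := exists_linearCombination_eq_proj (d := 1) (e := 1)
        (fun j => ι_mem_weightPart 1 j) hs_span (Set.Iio (n + 1))
      rw [proj_eq_self hs, Finsupp.linearCombination_apply] at hcs
      have hrel := linearIndependent_iff.1 hb (c.mapRange (FreeAlgebra.lift R b) (map_zero _)) (by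
        rw [Finsupp.linearCombination_apply, Finsupp.sum_mapRange_index (by simp), ← h0, ← hcs,
          map_finsuppSum]
        simp)
      have hc_zero : c = 0 := Finsupp.ext fun j =>
        ih _ (weightPart_mono (fun i hi => Nat.lt_of_succ_lt_succ hi) (hc j))
          (by simpa using DFunLike.congr_fun hrel j)
      rw [← hcs, hc_zero, Finsupp.sum_zero_index]
  refine (injective_iff_map_eq_zero _).2 fun s hs => ?_
  obtain ⟨n, hn⟩ := exists_mem_weightPart_Iio 1 s
  exact eq_zero n s hn hs

/-! ### Primitive elements and coinvariants of a bialgebra -/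

section Contract

variable {R : Type*} [CommSemiring R] {C : Type*} [AddCommMonoid C] [Module R C] [Coalgebra R C]

/-- The action of a linear functional on a coalgebra by contraction of the second factor of the
coproduct. -/
def contract (f : C →ₗ[R] R) : C →ₗ[R] C :=
  (TensorProduct.rid R C).toLinearMap ∘ₗ f.lTensor C ∘ₗ Coalgebra.comul

lemma counit_contract (f : C →ₗ[R] R) (a : C) :
    Coalgebra.counit (R := R) (contract f a) = f a := by
  have (z : C ⊗[R] C) : Coalgebra.counit (R := R) (TensorProduct.rid R C (f.lTensor C z)) =
      f (TensorProduct.lid R C ((Coalgebra.counit (R := R)).rTensor C z)) := by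
    induction z with
    | zero => simp
    | add y z hy hz => simp only [map_add, hy, hz]
    | tmul u w => simp [mul_comm]
  simp [contract, this]

end Contract

section Primitives

variable {R : Type*} [CommRing R] {A B : Type*} [Ring A] [Bialgebra R A] [Ring B] [Bialgebra R B]

variable (R A) in
/-- The Lie algebra of primitive elements of a bialgebra. -/
def primitives : LieSubalgebra R A where
  carrier := {a | Coalgebra.comul (R := R) a = a ⊗ₜ 1 + 1 ⊗ₜ a}
  add_mem' {a b} ha hb := by
    rw [Set.mem_ofPred_eq] at ha hb ⊢
    rw [map_add, ha, hb, TensorProduct.add_tmul, TensorProduct.tmul_add, add_add_add_comm]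
  zero_mem' := by simp
  smul_mem' r a ha := by
    rw [Set.mem_ofPred_eq] at ha ⊢
    rw [map_smul, ha, smul_add, TensorProduct.smul_tmul', TensorProduct.tmul_smul]
  lie_mem' {a b} ha hb := by
    change Coalgebra.comul a = a ⊗ₜ[R] 1 + 1 ⊗ₜ a at ha
    change Coalgebra.comul b = b ⊗ₜ[R] 1 + 1 ⊗ₜ b at hb
    change Coalgebra.comul ⁅a, b⁆ = ⁅a, b⁆ ⊗ₜ[R] 1 + 1 ⊗ₜ ⁅a, b⁆
    rw [LieRing.of_associative_ring_bracket, map_sub, Bialgebra.comul_mul, Bialgebra.comul_mul,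
      ha, hb]
    simp only [TensorProduct.sub_tmul, TensorProduct.tmul_sub, mul_add, add_mul,
      Algebra.TensorProduct.tmul_mul_tmul, one_mul, mul_one]
    abel

lemma mem_primitives {a : A} :
    a ∈ primitives R A ↔ Coalgebra.comul (R := R) a = a ⊗ₜ 1 + 1 ⊗ₜ a :=
  Iff.rfl

lemma counit_eq_zero_of_mem_primitives {a : A} (ha : a ∈ primitives R A) :
    Coalgebra.counit (R := R) a = 0 := by
  have h := Coalgebra.rTensor_counit_comul (R := R) a
  rw [mem_primitives.1 ha, map_add, LinearMap.rTensor_tmul, LinearMap.rTensor_tmul,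
    Bialgebra.counit_one, add_eq_right] at h
  simpa using congrArg (Coalgebra.counit (R := R) ∘ TensorProduct.lid R A) h

lemma mem_primitives_of_map_mem [Module.Flat R A] [Module.Flat R B] (φ : A →ₐc[R] B)
    (hφ : Function.Injective φ) {a : A} (ha : φ a ∈ primitives R B) : a ∈ primitives R A := by
  refine TensorProduct.map_injective_of_flat_flat (φ : A →ₗ[R] B) (φ : A →ₗ[R] B) hφ hφ
    ((CoalgHomClass.map_comp_comul_apply φ a).trans ?_)
  rw [mem_primitives.1 ha]
  simp

lemma contract_one (f : A →ₗ[R] R) : contract f 1 = f 1 • 1 := by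
  simp [contract, Algebra.TensorProduct.one_def]

lemma contract_of_mem_primitives (f : A →ₗ[R] R) {a : A} (ha : a ∈ primitives R A) :
    contract f a = f 1 • a + f a • 1 := by
  simp [contract, mem_primitives.1 ha]

lemma contract_mul (f : A →ₗ[R] R) (a : A) {m : A} (hm : m ∈ primitives R A)
    (hf : ∀ c, f (c * m) = 0) : contract f (a * m) = contract f a * m := by
  simp only [contract, LinearMap.comp_apply, Bialgebra.comul_mul, mem_primitives.1 hm]
  induction Coalgebra.comul (R := R) a with
  | zero => simp
  | add y z hy hz => simp only [map_add, add_mul, hy, hz]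
  | tmul u w => simp [mul_add, hf]

variable (R) in
/-- The elements `a` of a bialgebra whose coproduct is `a ⊗ 1` modulo `A ⊗ J`, for a left ideal `J`,
a condition expressed through the linear functionals vanishing on `J`. -/
def coinvariants (J : Ideal A) : Submodule R A :=
  ⨅ f : {f : A →ₗ[R] R // ∀ a ∈ J, f a = 0},
    LinearMap.eqLocus (contract f.1) (f.1 1 • LinearMap.id)

variable {J : Ideal A}

lemma mem_coinvariants {a : A} : a ∈ coinvariants R J ↔
    ∀ f : A →ₗ[R] R, (∀ a ∈ J, f a = 0) → contract f a = f 1 • a := by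
  simp [coinvariants]

lemma one_mem_coinvariants : (1 : A) ∈ coinvariants R J :=
  mem_coinvariants.2 fun f _ => contract_one f

lemma mem_coinvariants_of_mem_primitives {a : A} (ha : a ∈ primitives R A) (haJ : a ∈ J) :
    a ∈ coinvariants R J :=
  mem_coinvariants.2 fun f hf => by
    rw [contract_of_mem_primitives f ha, hf a haJ, zero_smul, add_zero]

lemma mem_coinvariants_of_linearCombination {Y : Type*} {b : Y → A}
    (hb : ∀ j, b j ∈ primitives R A) (hbJ : ∀ j, b j ∈ J) (hind : LinearIndependent A b)
    {c : Y →₀ A} (hc : Finsupp.linearCombination A b c ∈ coinvariants R J) (j : Y) :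
    c j ∈ coinvariants R J := by
  refine mem_coinvariants.2 fun f hf => ?_
  have hcf := mem_coinvariants.1 hc f hf
  have := linearIndependent_iff.1 hind
    (c.mapRange (contract f - f 1 • LinearMap.id : A →ₗ[R] A) (map_zero _)) (by
      rw [← sub_eq_zero.2 hcf, Finsupp.linearCombination_apply,
        Finsupp.sum_mapRange_index (by simp), Finsupp.linearCombination_apply, Finsupp.sum,
        Finsupp.sum, map_sum, Finset.smul_sum, ← Finset.sum_sub_distrib]
      refine Finset.sum_congr rfl fun i _ => ?_
      rw [smul_eq_mul, smul_eq_mul, LinearMap.sub_apply, LinearMap.smul_apply, LinearMap.id_apply,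
        sub_mul, smul_mul_assoc,
        contract_mul f (c i) (hb i) fun a => hf _ (J.mul_mem_left a (hbJ i))])
  exact sub_eq_zero.1 (DFunLike.congr_fun this j)

end Primitives

/-- Apply the counit to the coinvariance relations. -/
lemma sub_counit_mem_of_mem_coinvariants {K A : Type*} [Field K] [Ring A] [Bialgebra K A]
    {J : Ideal A} {a : A} (ha : a ∈ coinvariants K J) :
    a - algebraMap K A (Coalgebra.counit (R := K) a) ∈ J := by
  by_contra hn
  obtain ⟨f, hfa, hf⟩ := Submodule.exists_le_ker_of_notMem (p := J.restrictScalars K) hn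
  refine hfa ?_
  rw [map_sub, Algebra.algebraMap_eq_smul_one, map_smul, ← counit_contract f a,
    mem_coinvariants.1 ha f fun c hc => hf hc, map_smul, smul_eq_mul, smul_eq_mul, mul_comm,
    sub_self]

/-! ### The Dynkin operator and Friedrichs' criterion -/

section Dynkin

variable {R : Type*} [CommRing R] {X : Type*}

lemma lift_mem {L : Type*} [LieRing L] [LieAlgebra R L] (N : LieSubalgebra R L) {f : X → L}
    (hf : ∀ x, f x ∈ N) (g : FreeLieAlgebra R X) : FreeLieAlgebra.lift R f g ∈ N := by
  have : N.incl.comp (FreeLieAlgebra.lift R fun x => (⟨f x, hf x⟩ : N)) =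
      FreeLieAlgebra.lift R f := by
    ext x
    simp
  rw [← this]
  exact Subtype.property _

variable (R X) in
/-- The canonical map from the free Lie algebra to the free associative algebra. -/
def inc : FreeLieAlgebra R X →ₗ⁅R⁆ FreeAlgebra R X :=
  FreeLieAlgebra.lift R (FreeAlgebra.ι R)

@[simp] lemma inc_of (x : X) : inc R X (FreeLieAlgebra.of R x) = FreeAlgebra.ι R x :=
  FreeLieAlgebra.lift_of_apply _ _

lemma inc_lie (f g : FreeLieAlgebra R X) :
    inc R X ⁅f, g⁆ = inc R X f * inc R X g - inc R X g * inc R X f := by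
  rw [LieHom.map_lie, LieRing.of_associative_ring_bracket]

lemma inc_mem_primitives (f : FreeLieAlgebra R X) : inc R X f ∈ primitives R (FreeAlgebra R X) :=
  lift_mem _ (fun x => mem_primitives.2 (comul_ι x)) f

lemma counit_inc (f : FreeLieAlgebra R X) : Coalgebra.counit (R := R) (inc R X f) = 0 :=
  counit_eq_zero_of_mem_primitives (inc_mem_primitives f)

/-- The right-normed bracket `⁅x₁, ⁅x₂, …, xₙ⁆⁆` of the letters of a word. -/
def rightNormed : List X → FreeLieAlgebra R X
  | [] => 0
  | [x] => FreeLieAlgebra.of R x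
  | x :: y :: w => ⁅FreeLieAlgebra.of R x, rightNormed (y :: w)⁆

variable (R X) in
/-- The Dynkin operator: the linear map sending a word to its right-normed bracketing. -/
def dynkin : FreeAlgebra R X →ₗ[R] FreeLieAlgebra R X :=
  (word R X).constr R rightNormed

@[simp] lemma dynkin_one : dynkin R X 1 = 0 := by
  rw [← word_nil, dynkin, Basis.constr_basis, rightNormed]

lemma dynkin_ι_mul (x : X) (a : FreeAlgebra R X) :
    dynkin R X (FreeAlgebra.ι R x * a) = ⁅FreeLieAlgebra.of R x, dynkin R X a⁆ +
      Coalgebra.counit (R := R) a • FreeLieAlgebra.of R x := by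
  have : dynkin R X ∘ₗ LinearMap.mulLeft R (FreeAlgebra.ι R x) =
      LieAlgebra.ad R _ (FreeLieAlgebra.of R x) ∘ₗ dynkin R X +
        Coalgebra.counit.smulRight (FreeLieAlgebra.of R x) := by
    refine (word R X).ext fun w => ?_
    simp only [LinearMap.comp_apply, LinearMap.mulLeft_apply, ← word_cons, LinearMap.add_apply,
      LieAlgebra.ad_apply, LinearMap.smulRight_apply]
    cases w with
    | nil =>
      rw [dynkin, Basis.constr_basis, Basis.constr_basis, rightNormed, rightNormed]
      simp
    | cons y w =>
      rw [dynkin, Basis.constr_basis, Basis.constr_basis, rightNormed]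
      simp
  exact LinearMap.congr_fun this a

@[simp] lemma dynkin_ι (x : X) : dynkin R X (FreeAlgebra.ι R x) = FreeLieAlgebra.of R x := by
  simpa using dynkin_ι_mul (R := R) x 1

variable (R X) in
/-- The adjoint action of the free associative algebra on the free Lie algebra. -/
def adAct : FreeAlgebra R X →ₐ[R] Module.End R (FreeLieAlgebra R X) :=
  FreeAlgebra.lift R fun x => LieAlgebra.ad R _ (FreeLieAlgebra.of R x)

lemma adAct_ι (x : X) (f : FreeLieAlgebra R X) :
    adAct R X (FreeAlgebra.ι R x) f = ⁅FreeLieAlgebra.of R x, f⁆ := by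
  simp [adAct]

lemma adAct_inc (f g : FreeLieAlgebra R X) : adAct R X (inc R X f) g = ⁅f, g⁆ := by
  have : (adAct R X : FreeAlgebra R X →ₗ⁅R⁆ Module.End R (FreeLieAlgebra R X)).comp (inc R X) =
      LieAlgebra.ad R _ := by
    ext x : 1
    simp [adAct]
  exact LinearMap.congr_fun (LieHom.congr_fun this f) g

lemma dynkin_mul (a c : FreeAlgebra R X) : dynkin R X (a * c) =
    adAct R X a (dynkin R X c) + Coalgebra.counit (R := R) c • dynkin R X a := by
  have : dynkin R X ∘ₗ LinearMap.mulRight R c =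
      LinearMap.applyₗ (dynkin R X c) ∘ₗ (adAct R X).toLinearMap +
        Coalgebra.counit (R := R) c • dynkin R X := by
    refine (word R X).ext fun w => ?_
    simp only [LinearMap.comp_apply, LinearMap.mulRight_apply, LinearMap.add_apply,
      LinearMap.applyₗ_apply_apply, AlgHom.toLinearMap_apply, LinearMap.smul_apply]
    induction w with
    | nil => simp
    | cons x w ih =>
      rw [word_cons, mul_assoc, dynkin_ι_mul, ih, dynkin_ι_mul, lie_add, lie_smul,
        Bialgebra.counit_mul, map_mul (adAct R X), Module.End.mul_apply, adAct_ι, mul_comm,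
        mul_smul, smul_add, add_assoc]
  exact LinearMap.congr_fun this a

lemma dynkin_inc_lie (f g : FreeLieAlgebra R X) :
    dynkin R X (inc R X ⁅f, g⁆) = ⁅f, dynkin R X (inc R X g)⁆ + ⁅dynkin R X (inc R X f), g⁆ := by
  rw [inc_lie, map_sub, dynkin_mul, dynkin_mul, adAct_inc, adAct_inc, counit_inc, counit_inc,
    zero_smul, zero_smul, add_zero, add_zero, ← lie_skew g, sub_neg_eq_add]

lemma dynkin_surjective : Function.Surjective (dynkin R X) := by
  let N : LieSubalgebra R (FreeLieAlgebra R X) :=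
    { LinearMap.range (dynkin R X) with
      lie_mem' := by
        rintro f _ _ ⟨c, rfl⟩
        -- subtracting its constant term from `c` does not change its image
        refine ⟨inc R X f * (c - Coalgebra.counit (R := R) c • 1), ?_⟩
        simp [dynkin_mul, adAct_inc] }
  have hid : FreeLieAlgebra.lift R (FreeLieAlgebra.of R (X := X)) = LieHom.id :=
    FreeLieAlgebra.lift_comp_of LieHom.id
  intro f
  rw [← LieHom.id_apply (R := R) f, ← hid]
  exact lift_mem N (fun x => ⟨FreeAlgebra.ι R x, dynkin_ι x⟩) f

lemma dynkin_inc_dynkin_word (w : List X) : dynkin R X (inc R X (dynkin R X (word R X w))) =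
    (weight 1 w : R) • dynkin R X (word R X w) := by
  induction w with
  | nil => simp
  | cons x w ih =>
    rw [word_cons, dynkin_ι_mul, map_add, map_add, dynkin_inc_lie, ih]
    rcases w with _ | ⟨y, w⟩
    · simp
    · simp [add_smul, add_comm]

lemma inc_dynkin_word_mem (d : X → ℕ) (w : List X) :
    inc R X (dynkin R X (word R X w)) ∈ weightPart R d {weight d w} := by
  induction w with
  | nil => simp
  | cons x w ih =>
    have hx := ι_mem_weightPart (R := R) d x
    rw [word_cons, dynkin_ι_mul, map_add, inc_lie, inc_of]
    refine add_mem (sub_mem (mul_mem_weightPart ?_ hx ih) (mul_mem_weightPart ?_ ih hx)) ?_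
    · simp
    · simp [add_comm]
    · rcases w with _ | ⟨y, w⟩
      · simpa using hx
      · simp

lemma inc_dynkin_diag (d : X → ℕ) (c : ℕ → R) (a : FreeAlgebra R X) :
    inc R X (dynkin R X (diag d c a)) = diag d c (inc R X (dynkin R X a)) := by
  have : (inc R X).toLinearMap ∘ₗ dynkin R X ∘ₗ diag d c =
      diag d c ∘ₗ (inc R X).toLinearMap ∘ₗ dynkin R X :=
    (word R X).ext fun w => by simp [diag_of_mem (inc_dynkin_word_mem d w)]
  exact LinearMap.congr_fun this a

lemma proj_inc_mem_primitives (d : X → ℕ) (s : Set ℕ) (f : FreeLieAlgebra R X) :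
    proj d s (inc R X f) ∈ primitives R (FreeAlgebra R X) := by
  obtain ⟨a, rfl⟩ := dynkin_surjective f
  rw [proj, ← inc_dynkin_diag]
  exact inc_mem_primitives _

/-- The convolution of `inc ∘ dynkin` with the identity is the Euler operator. -/
lemma mul'_map_inc_dynkin_comul (a : FreeAlgebra R X) :
    LinearMap.mul' R _ (((inc R X).toLinearMap ∘ₗ dynkin R X).rTensor _ (Coalgebra.comul a)) =
      diag 1 (fun n => (n : R)) a := by
  set Φ := LinearMap.mul' R _ ∘ₗ ((inc R X).toLinearMap ∘ₗ dynkin R X).rTensor _ with hΦ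
  have hΦ_mul (x : X) (z : FreeAlgebra R X ⊗[R] FreeAlgebra R X) :
      Φ ((FreeAlgebra.ι R x ⊗ₜ 1 + 1 ⊗ₜ FreeAlgebra.ι R x) * z) = FreeAlgebra.ι R x *
        (Φ z + TensorProduct.lid R _ ((Coalgebra.counit (R := R)).rTensor _ z)) := by
    induction z with
    | zero => simp
    | add y z hy hz => rw [mul_add, map_add, hy, hz]; simp only [map_add, mul_add]; abel
    | tmul b c =>
      simp only [hΦ, add_mul, Algebra.TensorProduct.tmul_mul_tmul, one_mul, map_add,
        LinearMap.comp_apply, LinearMap.rTensor_tmul, LinearMap.mul'_apply,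
        LieHom.coe_toLinearMap, dynkin_ι_mul, inc_lie, inc_of, map_smul,
        TensorProduct.lid_tmul, sub_mul, mul_assoc, smul_mul_assoc, mul_smul_comm, mul_add]
      abel
  have : Φ ∘ₗ Coalgebra.comul = diag 1 fun n => (n : R) := by
    refine (word R X).ext fun w => ?_
    rw [LinearMap.comp_apply, diag_word]
    induction w with
    | nil => simp [hΦ, Algebra.TensorProduct.one_def]
    | cons x w ih =>
      rw [word_cons, Bialgebra.comul_mul, comul_ι, hΦ_mul, ih, Coalgebra.rTensor_counit_comul]
      simp [add_smul, add_comm, mul_add]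
  exact LinearMap.congr_fun this a

variable [Algebra ℚ R]

variable (R X) in
/-- The Dynkin operator divided by the degree: a left inverse of `inc`, where the junk value
`0⁻¹ = 0` in degree zero is harmless because `dynkin` vanishes there. -/
def dynkinInv : FreeAlgebra R X →ₗ[R] FreeLieAlgebra R X :=
  dynkin R X ∘ₗ diag 1 fun n => algebraMap ℚ R (n : ℚ)⁻¹

lemma algebraMap_inv_mul_natCast {n : ℕ} (hn : n ≠ 0) : algebraMap ℚ R (n : ℚ)⁻¹ * n = 1 := by
  rw [← map_natCast (algebraMap ℚ R), ← map_mul, inv_mul_cancel₀ (Nat.cast_ne_zero.2 hn), map_one]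

lemma dynkinInv_inc (f : FreeLieAlgebra R X) : dynkinInv R X (inc R X f) = f := by
  have : dynkinInv R X ∘ₗ (inc R X).toLinearMap ∘ₗ dynkin R X = dynkin R X := by
    refine (word R X).ext fun w => ?_
    simp only [LinearMap.comp_apply, LieHom.coe_toLinearMap, dynkinInv]
    rw [diag_of_mem (inc_dynkin_word_mem 1 w), map_smul, dynkin_inc_dynkin_word, smul_smul]
    rcases w with _ | ⟨y, w⟩
    · simp
    · rw [algebraMap_inv_mul_natCast (by simp), one_smul]
  obtain ⟨a, rfl⟩ := dynkin_surjective f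
  exact LinearMap.congr_fun this a

lemma inc_injective : Function.Injective (inc R X) :=
  Function.LeftInverse.injective dynkinInv_inc

/-- Friedrichs' criterion. -/
lemma inc_dynkinInv {p : FreeAlgebra R X} (hp : p ∈ primitives R (FreeAlgebra R X)) :
    inc R X (dynkinInv R X p) = p := by
  have hdynkin : inc R X (dynkin R X p) = diag 1 (fun n => (n : R)) p := by
    rw [← mul'_map_inc_dynkin_comul, mem_primitives.1 hp]
    simp
  rw [dynkinInv, LinearMap.comp_apply, inc_dynkin_diag, hdynkin]
  refine (word R X).ext_elem fun w => ?_
  rw [repr_diag, repr_diag]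
  rcases w with _ | ⟨y, w⟩
  · simp [repr_nil, counit_eq_zero_of_mem_primitives hp]
  · rw [← mul_assoc, algebraMap_inv_mul_natCast (by simp), one_mul]

end Dynkin

/-! ### Substituting homogeneous elements into free generators -/

section Lift

variable {R : Type*} [CommRing R] {X Y : Type*} {e : X → ℕ} {d : Y → ℕ} {b y : Y → FreeAlgebra R X}

lemma inc_lift (y : Y → FreeLieAlgebra R X) (g : FreeLieAlgebra R Y) :
    inc R X (FreeLieAlgebra.lift R y g) =
      FreeAlgebra.lift R (fun j => inc R X (y j)) (inc R Y g) := by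
  have : (inc R X).comp (FreeLieAlgebra.lift R y) =
      (FreeAlgebra.lift R fun j => inc R X (y j)).toLieHom.comp (inc R Y) := by
    ext j
    simp
  exact LieHom.congr_fun this g

lemma mem_primitives_of_lift_mem [Module.Flat R (FreeAlgebra R X)]
    (hb : ∀ j, b j ∈ primitives R (FreeAlgebra R X))
    (hinj : Function.Injective (FreeAlgebra.lift R b)) {t : FreeAlgebra R Y}
    (ht : FreeAlgebra.lift R b t ∈ primitives R (FreeAlgebra R X)) :
    t ∈ primitives R (FreeAlgebra R Y) := by
  let φ : FreeAlgebra R Y →ₐc[R] FreeAlgebra R X := .ofAlgHom (FreeAlgebra.lift R b)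
    (by
      ext j
      simp [counit_eq_zero_of_mem_primitives (hb j)])
    (by
      ext j
      simp [mem_primitives.1 (hb j)])
  exact mem_primitives_of_map_mem φ hinj ht

lemma lift_word_mem_weightPart (hb : ∀ j, b j ∈ weightPart R e {d j}) (w : List Y) :
    FreeAlgebra.lift R b (word R Y w) ∈ weightPart R e {weight d w} := by
  induction w with
  | nil =>
    rw [word_nil, map_one, ← word_nil]
    exact word_mem_weightPart rfl
  | cons j w ih =>
    rw [word_cons, map_mul, FreeAlgebra.lift_ι_apply]
    exact mul_mem_weightPart (by simp) (hb j) ih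

lemma proj_lift (hb : ∀ j, b j ∈ weightPart R e {d j}) (s : Set ℕ) (t : FreeAlgebra R Y) :
    proj e s (FreeAlgebra.lift R b t) = FreeAlgebra.lift R b (proj d s t) := by
  classical
  have : proj e s ∘ₗ (FreeAlgebra.lift R b).toLinearMap =
      (FreeAlgebra.lift R b).toLinearMap ∘ₗ proj d s := by
    refine (word R Y).ext fun w => ?_
    have hw := lift_word_mem_weightPart hb w
    rw [LinearMap.comp_apply, LinearMap.comp_apply, proj_word]
    split_ifs with hws
    · exact proj_eq_self (weightPart_mono (Set.singleton_subset_iff.2 hws) hw)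
    · rw [map_zero]
      exact proj_eq_zero (Set.disjoint_singleton_right.2 hws) hw
  exact LinearMap.congr_fun this t

lemma pos_of_mem_weightPart {a : FreeAlgebra R X} {n : ℕ} (ha : a ∈ weightPart R 1 {n})
    (ha₀ : Coalgebra.counit (R := R) a = 0) (hne : a ≠ 0) : 0 < n := by
  refine Nat.pos_of_ne_zero ?_
  rintro rfl
  exact hne (eq_zero_of_mem_weightPart (by simp) ha (mem_weightPart_Ici_one.2 ha₀))

lemma lift_sub_lift_word_mem_weightPart (hb : ∀ j, b j ∈ weightPart R e {d j})
    (hy : ∀ j, y j - b j ∈ weightPart R e (Set.Iio (d j))) (w : List Y) :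
    FreeAlgebra.lift R y (word R Y w) - FreeAlgebra.lift R b (word R Y w) ∈
      weightPart R e (Set.Iio (weight d w)) := by
  induction w with
  | nil => simp
  | cons j w ih =>
    have hyj : y j ∈ weightPart R e (Set.Iic (d j)) := by
      rw [← sub_add_cancel (y j) (b j)]
      exact add_mem (weightPart_mono Set.Iio_subset_Iic_self (hy j))
        (weightPart_mono (by simp) (hb j))
    rw [word_cons, map_mul, map_mul, FreeAlgebra.lift_ι_apply, FreeAlgebra.lift_ι_apply,
      weight_cons, ← sub_add_sub_cancel _ (y j * FreeAlgebra.lift R b (word R Y w)), ← mul_sub,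
      ← sub_mul]
    refine add_mem (mul_mem_weightPart ?_ hyj ih)
      (mul_mem_weightPart ?_ (hy j) (lift_word_mem_weightPart hb w))
    · intro i hi k hk
      exact Set.mem_Iio.2 (add_lt_add_of_le_of_lt hi hk)
    · simp

lemma lift_sub_lift_mem_weightPart (hb : ∀ j, b j ∈ weightPart R e {d j})
    (hy : ∀ j, y j - b j ∈ weightPart R e (Set.Iio (d j))) {n : ℕ} {t : FreeAlgebra R Y}
    (ht : t ∈ weightPart R d (Set.Iic n)) :
    FreeAlgebra.lift R y t - FreeAlgebra.lift R b t ∈ weightPart R e (Set.Iio n) := by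
  suffices weightPart R d (Set.Iic n) ≤ (weightPart R e (Set.Iio n)).comap
      ((FreeAlgebra.lift R y).toLinearMap - (FreeAlgebra.lift R b).toLinearMap) from this ht
  refine Submodule.span_le.2 ?_
  rintro _ ⟨w, hw, rfl⟩
  exact weightPart_mono (Set.Iio_subset_Iio hw) (lift_sub_lift_word_mem_weightPart hb hy w)

lemma lift_injective_of_leading_terms (hb : ∀ j, b j ∈ weightPart R e {d j})
    (hy : ∀ j, y j - b j ∈ weightPart R e (Set.Iio (d j)))
    (hinj : Function.Injective (FreeAlgebra.lift R b)) :
    Function.Injective (FreeAlgebra.lift R y) := by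
  suffices ∀ n, ∀ t ∈ weightPart R d (Set.Iio n), FreeAlgebra.lift R y t = 0 → t = 0 by
    refine (injective_iff_map_eq_zero _).2 fun t ht => ?_
    obtain ⟨n, hn⟩ := exists_mem_weightPart_Iio d t
    exact this n t hn ht
  intro n
  induction n with
  | zero => intro t ht _; rwa [weightPart_Iio_zero] at ht
  | succ n ih =>
    intro t ht ht₀
    rw [Set.Iio_add_one_eq_Iic] at ht
    have hbt : FreeAlgebra.lift R b t ∈ weightPart R e (Set.Iio n) := by
      simpa [ht₀] using lift_sub_lift_mem_weightPart hb hy ht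
    have hproj : proj d {n} t = 0 := by
      apply hinj
      rw [← proj_lift hb, map_zero]
      exact proj_eq_zero (by simp) hbt
    refine ih t ?_ ht₀
    have := sub_proj_mem (s := {n}) ht
    rwa [hproj, sub_zero, Set.Iic_sdiff_right] at this

end Lift

/-! ### Lie elements in the left ideal of a family of homogeneous elements -/

section Field

variable {K : Type*} [Field K] {X Y : Type*} {d : Y → ℕ} {b : Y → FreeAlgebra K X}

lemma mem_range_lift_of_mem_coinvariants (hb : ∀ j, b j ∈ weightPart K 1 {d j})
    (hprim : ∀ j, b j ∈ primitives K (FreeAlgebra K X))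
    (hind : LinearIndependent (FreeAlgebra K X) b) {a : FreeAlgebra K X}
    (ha : a ∈ coinvariants K (Ideal.span (Set.range b))) : a ∈ (FreeAlgebra.lift K b).range := by
  obtain ⟨n, hn⟩ := exists_mem_weightPart_Iio 1 a
  induction n generalizing a with
  | zero =>
    rw [weightPart_Iio_zero, Submodule.mem_bot] at hn
    exact hn ▸ zero_mem _
  | succ n ih =>
    set J := Ideal.span (Set.range b)
    set ε := Coalgebra.counit (R := K) a
    have hr : a - ε • 1 ∈ J := by
      rw [← Algebra.algebraMap_eq_smul_one]
      exact sub_counit_mem_of_mem_coinvariants ha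
    have hrn : a - ε • 1 ∈ weightPart K 1 (Set.Iio (n + 1)) := by
      rw [← word_nil]
      exact sub_mem hn (Submodule.smul_mem _ _ (word_mem_weightPart (by simp)))
    obtain ⟨c, hc, hcr⟩ := exists_linearCombination_eq_proj hb hr (Set.Iio (n + 1))
    rw [proj_eq_self hrn] at hcr
    have hrco : Finsupp.linearCombination _ b c ∈ coinvariants K J :=
      hcr ▸ sub_mem ha (Submodule.smul_mem _ _ one_mem_coinvariants)
    have hbJ (j : Y) : b j ∈ J := Ideal.subset_span (Set.mem_range_self j)
    have hcco := mem_coinvariants_of_linearCombination hprim hbJ hind hrco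
    rw [← sub_add_cancel a (ε • 1), ← hcr, Finsupp.linearCombination_apply]
    refine add_mem (sum_mem fun j _ => mul_mem (ih (hcco j) (weightPart_mono ?_ (hc j)))
      ⟨FreeAlgebra.ι K j, FreeAlgebra.lift_ι_apply _ _⟩) (Subalgebra.smul_mem _ (one_mem _) _)
    have hpos : 0 < d j :=
      pos_of_mem_weightPart (hb j) (counit_eq_zero_of_mem_primitives (hprim j)) (hind.ne_zero j)
    intro i hi
    rw [Set.mem_ofPred_eq, Set.mem_Iio] at hi
    exact Set.mem_Iio.2 (by lia)

lemma lift_injective_of_primitives (hprim : ∀ j, b j ∈ primitives K (FreeAlgebra K X))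
    (hind : LinearIndependent (FreeAlgebra K X) b) : Function.Injective (FreeAlgebra.lift K b) :=
  lift_injective_of_linearIndependent (Bialgebra.counitAlgHom K _)
    (fun j => counit_eq_zero_of_mem_primitives (hprim j)) hind

lemma exists_lift_inc_eq [CharZero K] (hb : ∀ j, b j ∈ weightPart K 1 {d j})
    (hprim : ∀ j, b j ∈ primitives K (FreeAlgebra K X))
    (hind : LinearIndependent (FreeAlgebra K X) b) {n : ℕ} {p : FreeAlgebra K X}
    (hp : p ∈ primitives K (FreeAlgebra K X)) (hpb : p ∈ Ideal.span (Set.range b))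
    (hpn : p ∈ weightPart K 1 {n}) :
    ∃ g, FreeAlgebra.lift K b (inc K Y g) = p ∧ inc K Y g ∈ weightPart K d {n} := by
  have hinj := lift_injective_of_primitives hprim hind
  obtain ⟨t, ht : FreeAlgebra.lift K b t = p⟩ :=
    mem_range_lift_of_mem_coinvariants hb hprim hind (mem_coinvariants_of_mem_primitives hp hpb)
  refine ⟨dynkinInv K Y t, ?_⟩
  rw [inc_dynkinInv (mem_primitives_of_lift_mem hprim hinj (ht.symm ▸ hp))]
  have : proj d {n} t = t := hinj (by rw [← proj_lift hb, ht, proj_eq_self hpn])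
  exact ⟨ht, this ▸ proj_mem _ _ _⟩

end Field

/-! ### Leading terms of a Lie subalgebra -/

lemma le_range_lift_of_leading_terms {K : Type*} [Field K] [CharZero K] {X Y : Type*}
    {L : LieSubalgebra K (FreeLieAlgebra K X)} {d : Y → ℕ} {b : Y → FreeAlgebra K X}
    {y : Y → FreeLieAlgebra K X} (hb : ∀ j, b j ∈ weightPart K 1 {d j})
    (hprim : ∀ j, b j ∈ primitives K (FreeAlgebra K X))
    (hind : LinearIndependent (FreeAlgebra K X) b)
    (hy : ∀ j, inc K X (y j) - b j ∈ weightPart K 1 (Set.Iio (d j))) (hyL : ∀ j, y j ∈ L)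
    (hL : ∀ l ∈ L, ∀ n, inc K X l ∈ weightPart K 1 (Set.Iic n) →
      proj 1 {n} (inc K X l) ∈ Ideal.span (Set.range b)) :
    L ≤ (FreeLieAlgebra.lift K y).range := by
  intro l hl
  obtain ⟨n, hn⟩ := exists_mem_weightPart_Iio 1 (inc K X l)
  induction n generalizing l with
  | zero =>
    rw [weightPart_Iio_zero, Submodule.mem_bot] at hn
    rw [(injective_iff_map_eq_zero _).1 inc_injective l hn]
    exact zero_mem _
  | succ n ih =>
    rw [Set.Iio_add_one_eq_Iic] at hn
    obtain ⟨g, hg, hgn⟩ := exists_lift_inc_eq hb hprim hind (proj_inc_mem_primitives 1 {n} l)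
      (hL l hl n hn) (proj_mem _ _ _)
    -- `lift y g` has the same leading term as `l`
    have hsub : inc K X (l - FreeLieAlgebra.lift K y g) ∈ weightPart K 1 (Set.Iio n) := by
      have hlow := sub_proj_mem (s := {n}) hn
      rw [Set.Iic_sdiff_right, ← hg] at hlow
      have := sub_mem hlow (lift_sub_lift_mem_weightPart hb hy (weightPart_mono (by simp) hgn))
      rwa [sub_sub_sub_cancel_right, ← inc_lift, ← map_sub] at this
    rw [← sub_add_cancel l (FreeLieAlgebra.lift K y g)]
    exact add_mem (ih (sub_mem hl (lift_mem L hyL g)) hsub) ⟨g, rfl⟩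

lemma exists_free_generators {K : Type u} [Field K] [CharZero K] {X : Type v}
    (L : LieSubalgebra K (FreeLieAlgebra K X)) :
    ∃ (Y : Type (max u v)) (y : Y → FreeLieAlgebra K X),
      Function.Injective (FreeLieAlgebra.lift K y) ∧ (FreeLieAlgebra.lift K y).range = L := by
  let I := Σ n : ℕ, {l : FreeLieAlgebra K X // l ∈ L ∧ inc K X l ∈ weightPart K 1 (Set.Iic n)}
  let b (i : I) : FreeAlgebra K X := proj 1 {i.1} (inc K X i.2)
  have hb (i : I) : b i ∈ weightPart K 1 {i.1} := proj_mem _ _ _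
  have hprim (i : I) : b i ∈ primitives K (FreeAlgebra K X) := proj_inc_mem_primitives 1 {i.1} _
  have hlow (i : I) : inc K X i.2 - b i ∈ weightPart K 1 (Set.Iio i.1) := by
    simpa only [Set.Iic_sdiff_right] using sub_proj_mem (s := {i.1}) i.2.2.2
  obtain ⟨Y, a, hind, hspan⟩ := exists_linearIndependent_subfamily hb
  have hinj := lift_injective_of_primitives (fun j => hprim (a j)) hind
  refine ⟨Y, fun j => (a j).2, fun g g' hg => ?_, le_antisymm ?_ ?_⟩
  · apply inc_injective
    apply lift_injective_of_leading_terms (fun j => hb (a j)) (fun j => hlow (a j)) hinj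
    rw [← inc_lift, ← inc_lift, hg]
  · rintro _ ⟨g, rfl⟩
    exact lift_mem L (fun j => (a j).2.2.1) g
  · exact le_range_lift_of_leading_terms (fun j => hb (a j)) (fun j => hprim (a j)) hind
      (fun j => hlow (a j)) (fun j => (a j).2.2.1) fun l hl n hn => hspan ⟨n, l, hl, hn⟩

end ShirshovWitt

end

/-- Shirshov–Witt theorem: every Lie subalgebra of a free Lie algebra over a field of
characteristic zero is itself a free Lie algebra. -/
theorem lieSubalgebra_of_free_is_free
    (K : Type u) [Field K] [CharZero K] (X : Type v)
    (L : LieSubalgebra K (FreeLieAlgebra K X)) :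
    ∃ Y : Type (max u v), Nonempty (L ≃ₗ⁅K⁆ FreeLieAlgebra K Y) := by
  obtain ⟨Y, y, hinj, rfl⟩ := ShirshovWitt.exists_free_generators L
  exact ⟨Y, ⟨(LieEquiv.ofInjective _ hinj).symm⟩⟩
end

section
/- The Weyl determinant of type C factorizes as a product: det((x_i^j − x_i^{−j})_{1≤i,j≤n}) = (∏_{i=1}^n x_i^{−n}) · (∏_{i=1}^n (x_i² − 1)) · (∏_{1≤i<j≤n} (x_i − x_j)(1 − x_i x_j)). -/
/-!
If `x y = a`, then `x ^ (k + 1) - y ^ (k + 1)` is `x - y` times the value at `x + y` of the Dickson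
polynomial of the second kind with parameter `a`, which is monic of degree `k`. Hence a determinant
with these entries is a Vandermonde determinant in the sums `x i + y i`, up to the row factors
`x i - y i`. For `a = 1` its factors `(x j + y j) - (x i + y i)` are
`y i * y j * ((x i - x j) * (1 - x i * x j))`; each `y i` occurs in `n - 1` of them and once more in
`x i - y i = y i * (x i ^ 2 - 1)`.
-/

open Finset

section CommRing

open Polynomial

variable {R : Type*} [CommRing R]

theorem degree_dickson_two [Nontrivial R] (a : R) (n : ℕ) : (dickson 2 a n).degree = n := by
  induction n using Nat.twoStepInduction with
  | zero => norm_num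
  | one => simp
  | more n ih₀ ih₁ =>
    have hX : (X * dickson 2 a (n + 1)).degree = ((n + 2 : ℕ) : WithBot ℕ) := by
      rw [mul_comm, degree_mul_X, ih₁]
      norm_cast
    have hlt : (C a * dickson 2 a n).degree < (X * dickson 2 a (n + 1)).degree := by
      rw [hX, ← smul_eq_C_mul]
      refine (degree_smul_le a _).trans_lt ?_
      rw [ih₀]
      norm_cast
      lia
    rw [dickson_add_two, degree_sub_eq_left_of_degree_lt hlt, hX]

theorem monic_dickson_two (a : R) (n : ℕ) : (dickson 2 a n).Monic := by
  nontriviality R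
  induction n using Nat.twoStepInduction with
  | zero => norm_num
  | one => simp [monic_X]
  | more n _ ih₁ =>
    rw [dickson_add_two, ← smul_eq_C_mul]
    refine (monic_X.mul ih₁).sub_of_left ((degree_smul_le a _).trans_lt ?_)
    rw [mul_comm, degree_mul_X, degree_dickson_two, degree_dickson_two]
    norm_cast
    lia

theorem sub_mul_eval_add_dickson_two (x y : R) (n : ℕ) :
    (x - y) * (dickson 2 (x * y) n).eval (x + y) = x ^ (n + 1) - y ^ (n + 1) := by
  induction n using Nat.twoStepInduction with
  | zero => norm_num
  | one => simp only [dickson_one, eval_X]; ring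
  | more n ih₀ ih₁ =>
    simp only [dickson_add_two, eval_sub, eval_mul, eval_X, eval_C]
    linear_combination (x + y) * ih₁ - x * y * ih₀

theorem det_pow_succ_sub_pow_succ {n : ℕ} {a : R} {x y : Fin n → R} (h : ∀ i, x i * y i = a) :
    (Matrix.of fun i j : Fin n => x i ^ ((j : ℕ) + 1) - y i ^ ((j : ℕ) + 1)).det =
      (∏ i, (x i - y i)) * ∏ i, ∏ j ∈ Ioi i, (x j + y j - (x i + y i)) := by
  nontriviality R
  have hentry (i j : Fin n) : x i ^ ((j : ℕ) + 1) - y i ^ ((j : ℕ) + 1) =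
      (x i - y i) * Matrix.of (fun i j : Fin n => (dickson 2 a j).eval (x i + y i)) i j := by
    rw [Matrix.of_apply, ← h i, sub_mul_eval_add_dickson_two]
  simp_rw [hentry]
  rw [Matrix.det_mul_column, ← Matrix.det_vandermonde,
    Matrix.det_eval_matrixOfPolynomials_eq_det_vandermonde _ (fun j : Fin n => dickson 2 a j)
      (fun j => natDegree_eq_of_degree_eq_some (degree_dickson_two a j))
      (fun j => monic_dickson_two a j)]

theorem sub_eq_mul_sq_sub_one {x y : R} (h : x * y = 1) : x - y = y * (x ^ 2 - 1) := by
  linear_combination -x * h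

theorem add_sub_add_eq_mul_mul {x y x' y' : R} (h : x * y = 1) (h' : x' * y' = 1) :
    x' + y' - (x + y) = y * y' * ((x - x') * (1 - x * x')) := by
  linear_combination (x * x' * y' - x' ^ 2 * y' - y') * h + (x + y - x') * h'

end CommRing

theorem prod_mul_prod_prod_Ioi_mul {ι M : Type*} [Fintype ι] [LinearOrder ι]
    [LocallyFiniteOrderTop ι] [LocallyFiniteOrderBot ι] [CommMonoid M] (f : ι → M) :
    (∏ i, f i) * ∏ i, ∏ j ∈ Ioi i, f i * f j = ∏ i, f i ^ Fintype.card ι := by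
  rw [prod_prod_Ioi_mul_eq_prod_prod_off_diag fun _ i => f i, ← prod_mul_distrib]
  refine prod_congr rfl fun i _ => ?_
  rw [← Fintype.prod_eq_mul_prod_compl i fun _ => f i, prod_const, card_univ]

theorem weyl_determinant_C_factorization_general
    {R : Type*} [CommRing R] (n : ℕ) (x : Fin n → Rˣ) :
    Matrix.det (Matrix.of fun i j : Fin n =>
        (x i : R) ^ ((j : ℕ) + 1) - (↑(x i)⁻¹ : R) ^ ((j : ℕ) + 1)) =
      (∏ i, (↑(x i)⁻¹ : R) ^ n) * (∏ i, ((x i : R) ^ 2 - 1)) *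
        ∏ i, ∏ j ∈ Ioi i, ((x i : R) - x j) * (1 - x i * x j) := by
  have hinv (i : Fin n) : (x i : R) * ↑(x i)⁻¹ = 1 := (x i).mul_inv
  calc
    _ = (∏ i, ((x i : R) - ↑(x i)⁻¹)) *
          ∏ i, ∏ j ∈ Ioi i, ((x j : R) + ↑(x j)⁻¹ - (x i + ↑(x i)⁻¹)) :=
      det_pow_succ_sub_pow_succ hinv
    _ = ((∏ i, (↑(x i)⁻¹ : R)) * ∏ i, ∏ j ∈ Ioi i, (↑(x i)⁻¹ : R) * ↑(x j)⁻¹) *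
          (∏ i, ((x i : R) ^ 2 - 1)) *
          ∏ i, ∏ j ∈ Ioi i, ((x i : R) - x j) * (1 - x i * x j) := by
      simp_rw [sub_eq_mul_sq_sub_one (hinv _), add_sub_add_eq_mul_mul (hinv _) (hinv _),
        prod_mul_distrib]
      ring
    _ = _ := by rw [prod_mul_prod_prod_Ioi_mul, Fintype.card_fin]

/-- Factorization of the Weyl determinant of type `C(n)`:
`det((x_i^j − x_i^{−j})) = ∏ x_i^{−n} · ∏ (x_i² − 1) · ∏_{i<j} (x_i − x_j)(1 − x_i x_j)`. -/
theorem weyl_determinant_C_factorization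
    {K : Type*} [Field K] (n : ℕ) (x : Fin n → K) (hx : ∀ i, x i ≠ 0) :
    Matrix.det (Matrix.of fun i j : Fin n =>
        x i ^ ((j : ℕ) + 1) - (x i)⁻¹ ^ ((j : ℕ) + 1)) =
      (∏ i, (x i)⁻¹ ^ n) * (∏ i, (x i ^ 2 - 1)) *
        ∏ i, ∏ j ∈ Finset.Ioi i, (x i - x j) * (1 - x i * x j) :=
  weyl_determinant_C_factorization_general n fun i => Units.mk0 (x i) (hx i)
end

section
/- det((x_i^{j+1} − x_i^{−j−1})_{1≤i,j≤n}) = Δ_{C(n)}(x₁,…,xₙ) · (∏_{i=1}^n x_i^{−1}) · (Σ_{j=0}^{n} (e_j² − e_j e_{j+2})), where the left-hand side is the determinant of the n × n matrix whose (i,j)-entry is x_i^{j+1} − x_i^{−j−1}. -/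
/-!
Let `E z = ∏ i, (1 + x i * z) = ∑ j, e j * z ^ j` and let `c k = ∑ j, e j * e (j + k)`. Multiplying
out, `(y - y⁻¹) * (E y * E y⁻¹) = ∑ k ≤ n, (c k - c (k + 2)) * (y ^ (k + 1) - y⁻¹ ^ (k + 1))`, and
this vanishes at each `y = -x i` because `E (-(x i)⁻¹) = 0`. Hence the `n + 1` columns
`(x i ^ (k + 1) - (x i)⁻¹ ^ (k + 1))_i` satisfy a linear relation with coefficients
`(-1) ^ k * (c k - c (k + 2))`. By Cramer's rule the minors omitting the first and the last of these
columns are, up to the sign `(-1) ^ n`, in the ratio of the extreme coefficients, which are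
`∑ j, (e j ^ 2 - e j * e (j + 2))` and `(-1) ^ n * ∏ i, x i`.
-/

open Finset

theorem neg_one_pow_mul_det_submatrix_succAbove_of_mulVec_eq_zero {R : Type*} [CommRing R] {n : ℕ}
    {M : Matrix (Fin n) (Fin (n + 1)) R} {d : Fin (n + 1) → R} (h : M.mulVec d = 0)
    (i j : Fin (n + 1)) :
    (-1) ^ (i : ℕ) * d j * (M.submatrix id i.succAbove).det =
      (-1) ^ (j : ℕ) * d i * (M.submatrix id j.succAbove).det := by
  -- Bordering `M` by a unit row makes `V.mulVec d` a multiple of a unit vector, so applying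
  -- `V.adjugate` to it picks out a single cofactor.
  let V : Matrix (Fin (n + 1)) (Fin (n + 1)) R := Matrix.of (Matrix.vecCons (Pi.single i 1) M)
  have minor_V (k : Fin (n + 1)) : V.submatrix Fin.succ k.succAbove = M.submatrix id k.succAbove :=
    rfl
  have det_V : V.det = (-1) ^ (i : ℕ) * (M.submatrix id i.succAbove).det := by
    rw [Matrix.det_succ_row_zero, sum_eq_single i (by simp +contextual [V]) (by simp), minor_V]
    simp [V]
  have V_mulVec : V.mulVec d = Pi.single 0 (d i) := by
    ext k
    cases k using Fin.cases with
    | zero => simp [V, Matrix.mulVec]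
    | succ k => exact congrFun h k
  have adjugate_V : V.det * d j = V.adjugate j 0 * d i := by
    have := congrFun (congrArg V.adjugate.mulVec V_mulVec) j
    simpa [Matrix.mulVec_mulVec, Matrix.adjugate_mul, Matrix.smul_mulVec, mul_comm] using this
  rw [Matrix.adjugate_fin_succ_eq_det_submatrix, Fin.val_zero, zero_add, Fin.succAbove_zero,
    minor_V, det_V] at adjugate_V
  linear_combination adjugate_V

theorem sum_range_sum_range_eq_sum_lag {M : Type*} [AddCommMonoid M] (f : ℕ → ℕ → M) (N : ℕ) :
    ∑ i ∈ range N, ∑ j ∈ range N, f i j =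
      ∑ k ∈ range N, ∑ j ∈ range (N - k), f j (j + k) +
        ∑ k ∈ range N, ∑ j ∈ range (N - (k + 1)), f (j + (k + 1)) j := by
  have above : ∑ i ∈ range N, ∑ j ∈ Ico i N, f i j =
      ∑ k ∈ range N, ∑ j ∈ range (N - k), f j (j + k) := by
    simp only [sum_Ico_eq_sum_range]
    exact sum_comm' (by simp only [mem_range]; lia)
  have below : ∑ i ∈ range N, ∑ j ∈ range i, f i j =
      ∑ k ∈ range N, ∑ j ∈ range (N - (k + 1)), f (j + (k + 1)) j := calc
    _ = ∑ j ∈ range N, ∑ i ∈ Ico (j + 1) N, f i j :=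
      sum_comm' (by simp only [mem_range, mem_Ico]; lia)
    _ = ∑ j ∈ range N, ∑ k ∈ range (N - (j + 1)), f (j + (k + 1)) j := by
      simp only [sum_Ico_eq_sum_range, add_assoc, add_comm 1]
    _ = _ := sum_comm' (by simp only [mem_range]; lia)
  rw [← above, ← below, ← sum_add_distrib]
  refine sum_congr rfl fun i hi => ?_
  rw [add_comm, sum_range_add_sum_Ico _ (mem_range.1 hi).le]

section Autocorrelation

variable {R : Type*}

/-- The autocorrelation at lag `k` of the finite sequence `a 0, …, a (N - 1)`: the coefficient of
`y ^ k` in `A y * A y⁻¹`, where `A y = ∑ j < N, a j * y ^ j`. The subtraction truncates, so it is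
`0` for `N ≤ k`. -/
def autocorr [NonUnitalNonAssocSemiring R] (a : ℕ → R) (N k : ℕ) : R :=
  ∑ j ∈ range (N - k), a j * a (j + k)

theorem autocorr_of_le [NonUnitalNonAssocSemiring R] (a : ℕ → R) {N k : ℕ} (h : N ≤ k) :
    autocorr a N k = 0 := by
  simp [autocorr, Nat.sub_eq_zero_of_le h]

theorem autocorr_succ_self [NonUnitalNonAssocSemiring R] (a : ℕ → R) (n : ℕ) :
    autocorr a (n + 1) n = a 0 * a n := by
  simp [autocorr]

theorem autocorr_eq_sum_range [NonUnitalNonAssocSemiring R] {a : ℕ → R} {N : ℕ}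
    (h : ∀ j, N ≤ j → a j = 0) (k : ℕ) :
    autocorr a N k = ∑ j ∈ range N, a j * a (j + k) := by
  refine sum_subset (range_subset_range.2 (Nat.sub_le N k)) fun j _ hj => ?_
  rw [h (j + k) (by simpa [Nat.sub_le_iff_le_add] using hj), mul_zero]

theorem autocorr_zero_sub_autocorr_two [Ring R] {a : ℕ → R} {N : ℕ}
    (h : ∀ j, N ≤ j → a j = 0) :
    autocorr a N 0 - autocorr a N 2 = ∑ j ∈ range N, (a j ^ 2 - a j * a (j + 2)) := by
  simp only [autocorr_eq_sum_range h, ← sum_sub_distrib, add_zero, sq]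

theorem sum_mul_pow_mul_sum_mul_pow_eq_sum_autocorr [CommSemiring R] (a : ℕ → R) {y z : R}
    (hyz : y * z = 1) (N : ℕ) :
    (∑ j ∈ range N, a j * y ^ j) * ∑ j ∈ range N, a j * z ^ j =
      ∑ k ∈ range N, autocorr a N k * z ^ k +
        ∑ k ∈ range N, autocorr a N (k + 1) * y ^ (k + 1) := by
  have hpow (j : ℕ) : y ^ j * z ^ j = 1 := by rw [← mul_pow, hyz, one_pow]
  rw [sum_mul_sum, sum_range_sum_range_eq_sum_lag]
  simp only [autocorr, sum_mul]
  refine congrArg₂ _ (sum_congr rfl fun k _ => sum_congr rfl fun j _ => ?_)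
    (sum_congr rfl fun k _ => sum_congr rfl fun j _ => ?_)
  · calc
      _ = a j * a (j + k) * z ^ k * (y ^ j * z ^ j) := by ring
      _ = _ := by rw [hpow, mul_one]
  · calc
      _ = a j * a (j + (k + 1)) * y ^ (k + 1) * (y ^ j * z ^ j) := by ring
      _ = _ := by rw [hpow, mul_one]

variable [CommRing R]

theorem sum_sub_mul_pow_sub_pow (c : ℕ → R) {y z : R} (hyz : y * z = 1) (N : ℕ) :
    ∑ k ∈ range N, (c k - c (k + 2)) * (y ^ (k + 1) - z ^ (k + 1)) =
      (y - z) * (∑ k ∈ range N, c k * z ^ k + ∑ k ∈ range N, c (k + 1) * y ^ (k + 1)) -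
        (y * c N + c (N + 1)) * (y ^ N - z ^ N) := by
  induction N with
  | zero => simp
  | succ N ih =>
    simp only [sum_range_succ, ih]
    linear_combination c (N + 1) * (y ^ N - z ^ N) * hyz

theorem sum_autocorr_sub_mul_pow_sub_pow (a : ℕ → R) {y z : R} (hyz : y * z = 1) (N : ℕ) :
    ∑ k ∈ range N, (autocorr a N k - autocorr a N (k + 2)) * (y ^ (k + 1) - z ^ (k + 1)) =
      (y - z) * ((∑ j ∈ range N, a j * y ^ j) * ∑ j ∈ range N, a j * z ^ j) := by
  rw [sum_sub_mul_pow_sub_pow _ hyz, autocorr_of_le a le_rfl, autocorr_of_le a N.le_succ,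
    sum_mul_pow_mul_sum_mul_pow_eq_sum_autocorr a hyz]
  ring

end Autocorrelation

section ElementarySymmetric

variable {ι R : Type*}

theorem esymm_map_val_eq_zero_of_card_lt [CommSemiring R] (s : Finset ι) (x : ι → R) {j : ℕ}
    (h : #s < j) : (s.val.map x).esymm j = 0 := by
  rw [Finset.esymm_map_val, powersetCard_eq_empty.2 h, sum_empty]

theorem esymm_map_val_zero [CommSemiring R] (s : Finset ι) (x : ι → R) :
    (s.val.map x).esymm 0 = 1 := by
  simp [Finset.esymm_map_val]

theorem esymm_map_val_card [CommSemiring R] (s : Finset ι) (x : ι → R) :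
    (s.val.map x).esymm #s = ∏ i ∈ s, x i := by
  rw [Finset.esymm_map_val, powersetCard_self, sum_singleton]

theorem prod_one_add_mul_eq_sum_esymm [CommSemiring R] (s : Finset ι) (x : ι → R) (z : R) :
    ∏ i ∈ s, (1 + x i * z) = ∑ j ∈ range (#s + 1), (s.val.map x).esymm j * z ^ j := by
  rw [prod_one_add, sum_powerset]
  refine sum_congr rfl fun j _ => ?_
  rw [Finset.esymm_map_val, sum_mul]
  refine sum_congr rfl fun t ht => ?_
  rw [prod_mul_distrib, prod_const, (mem_powersetCard.1 ht).2]

theorem autocorr_esymm_card [CommSemiring R] (s : Finset ι) (x : ι → R) :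
    autocorr (s.val.map x).esymm (#s + 1) #s = ∏ i ∈ s, x i := by
  rw [autocorr_succ_self, esymm_map_val_zero, one_mul, esymm_map_val_card]

theorem autocorr_esymm_zero_sub_autocorr_esymm_two [CommRing R] (s : Finset ι) (x : ι → R) :
    autocorr (s.val.map x).esymm (#s + 1) 0 - autocorr (s.val.map x).esymm (#s + 1) 2 =
      ∑ j ∈ range (#s + 1),
        ((s.val.map x).esymm j ^ 2 - (s.val.map x).esymm j * (s.val.map x).esymm (j + 2)) :=
  autocorr_zero_sub_autocorr_two fun _ hj => esymm_map_val_eq_zero_of_card_lt s x hj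

theorem sum_esymm_mul_neg_pow_eq_zero [CommRing R] {s : Finset ι} {x : ι → R} {i : ι} (hi : i ∈ s)
    {z : R} (hz : x i * z = 1) :
    ∑ j ∈ range (#s + 1), (s.val.map x).esymm j * (-z) ^ j = 0 := by
  rw [← prod_one_add_mul_eq_sum_esymm]
  exact prod_eq_zero hi (by rw [mul_neg, hz, add_neg_cancel])

theorem sum_autocorr_esymm_mul_pow_sub_pow_eq_zero [CommRing R] {s : Finset ι} {x : ι → R} {i : ι}
    (hi : i ∈ s) {z : R} (hz : x i * z = 1) :
    ∑ k ∈ range (#s + 1), (x i ^ (k + 1) - z ^ (k + 1)) *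
      ((-1) ^ k * (autocorr (s.val.map x).esymm (#s + 1) k -
        autocorr (s.val.map x).esymm (#s + 1) (k + 2))) = 0 := by
  have h := sum_autocorr_sub_mul_pow_sub_pow (s.val.map x).esymm
    (show -x i * -z = 1 by rw [neg_mul_neg, hz]) (#s + 1)
  rw [sum_esymm_mul_neg_pow_eq_zero hi hz, mul_zero, mul_zero] at h
  rw [← neg_eq_zero, ← h, ← sum_neg_distrib]
  refine sum_congr rfl fun k _ => ?_
  rw [neg_pow (x i), neg_pow z]
  ring

end ElementarySymmetric

theorem prod_mul_det_pow_add_two_sub_pow_add_two {R : Type*} [CommRing R] {n : ℕ} {x y : Fin n → R}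
    (hxy : ∀ i, x i * y i = 1) :
    (∏ i, x i) * (Matrix.of fun i j : Fin n => x i ^ ((j : ℕ) + 2) - y i ^ ((j : ℕ) + 2)).det =
      (Matrix.of fun i j : Fin n => x i ^ ((j : ℕ) + 1) - y i ^ ((j : ℕ) + 1)).det *
        (autocorr (univ.val.map x).esymm (n + 1) 0 -
          autocorr (univ.val.map x).esymm (n + 1) 2) := by
  let c : ℕ → R := autocorr (univ.val.map x).esymm (n + 1)
  let d : Fin (n + 1) → R := fun k => (-1) ^ (k : ℕ) * (c k - c (k + 2))
  let M : Matrix (Fin n) (Fin (n + 1)) R :=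
    Matrix.of fun i k => x i ^ ((k : ℕ) + 1) - y i ^ ((k : ℕ) + 1)
  have relation : M.mulVec d = 0 := by
    ext i
    have := sum_autocorr_esymm_mul_pow_sub_pow_eq_zero (mem_univ i) (hxy i)
    rwa [card_fin, ← Fin.sum_univ_eq_sum_range] at this
  have d_zero : d 0 = c 0 - c 2 := by simp [d]
  have d_last : d (Fin.last n) = (-1) ^ n * ∏ i, x i := by
    have c_n : c n = ∏ i, x i := by
      have := autocorr_esymm_card univ x
      rwa [card_fin] at this
    have c_n_add_two : c (n + 2) = 0 := autocorr_of_le _ (Nat.le_succ _)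
    simp [d, c_n, c_n_add_two]
  have minor_first : M.submatrix id (Fin.succAbove 0) =
      Matrix.of fun i j : Fin n => x i ^ ((j : ℕ) + 2) - y i ^ ((j : ℕ) + 2) := by
    ext; simp [M]
  have minor_last : M.submatrix id (Fin.succAbove (Fin.last n)) =
      Matrix.of fun i j : Fin n => x i ^ ((j : ℕ) + 1) - y i ^ ((j : ℕ) + 1) := by
    ext; simp [M]
  have minors := neg_one_pow_mul_det_submatrix_succAbove_of_mulVec_eq_zero relation 0 (Fin.last n)
  rw [d_zero, d_last, minor_first, minor_last, Fin.val_zero, pow_zero, one_mul, Fin.val_last,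
    mul_assoc, mul_assoc, mul_comm (c 0 - c 2)] at minors
  exact (isUnit_neg_one.pow n).mul_left_cancel minors

theorem shifted_weyl_determinant_C_general {R : Type*} [CommRing R] (n : ℕ) (x y : Fin n → R)
    (hxy : ∀ i, x i * y i = 1) (e : ℕ → R)
    (he : ∀ j, e j = ∑ t ∈ powersetCard j univ, ∏ i ∈ t, x i) :
    (Matrix.of fun i j : Fin n => x i ^ ((j : ℕ) + 2) - y i ^ ((j : ℕ) + 2)).det =
      (Matrix.of fun i j : Fin n => x i ^ ((j : ℕ) + 1) - y i ^ ((j : ℕ) + 1)).det *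
        (∏ i, y i) * ∑ j ∈ range (n + 1), (e j ^ 2 - e j * e (j + 2)) := by
  have e_eq : (univ.val.map x).esymm = e := by ext j; rw [he, Finset.esymm_map_val]
  have prod_inv : (∏ i, y i) * ∏ i, x i = 1 := by
    rw [mul_comm, ← prod_mul_distrib, prod_eq_one fun i _ => hxy i]
  have coeff_zero := autocorr_esymm_zero_sub_autocorr_esymm_two univ x
  rw [card_fin, e_eq] at coeff_zero
  rw [← coeff_zero, mul_right_comm, ← e_eq, ← prod_mul_det_pow_add_two_sub_pow_add_two hxy,
    mul_comm, ← mul_assoc, prod_inv, one_mul]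

/-- The shifted Weyl determinant of type `C(n)`:
`det((x_i^{j+1} − x_i^{−j−1})) = Δ_{C(n)} · ∏ x_i^{−1} · Σ_{j=0}^{n} (e_j² − e_j e_{j+2})`,
where `Δ_{C(n)} = det((x_i^j − x_i^{−j}))` and `e_j` is the `j`-th elementary symmetric
polynomial in `x₁, …, xₙ` (with `e₀ = 1` and `e_j = 0` for `j > n`). -/
theorem shifted_weyl_determinant_C
    {K : Type*} [Field K] (n : ℕ) (x : Fin n → K) (hx : ∀ i, x i ≠ 0)
    (e : ℕ → K)
    (he : ∀ j, e j = ∑ t ∈ Finset.powersetCard j (Finset.univ : Finset (Fin n)),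
        ∏ i ∈ t, x i) :
    Matrix.det (Matrix.of fun i j : Fin n =>
        x i ^ ((j : ℕ) + 2) - (x i)⁻¹ ^ ((j : ℕ) + 2)) =
      Matrix.det (Matrix.of fun i j : Fin n =>
          x i ^ ((j : ℕ) + 1) - (x i)⁻¹ ^ ((j : ℕ) + 1)) *
        (∏ i, (x i)⁻¹) *
        ∑ j ∈ Finset.range (n + 1), (e j ^ 2 - e j * e (j + 2)) :=
  shifted_weyl_determinant_C_general n x (fun i => (x i)⁻¹) (fun i => mul_inv_cancel₀ (hx i)) e he
end

section
/- The bilinear form B induces a well-defined nondegenerate pairing on the homology ker d / im d: for every a ∈ ker d, if B(a, b) = 0 for all b ∈ ker d, then a lies in the image of d; and symmetrically, for every a ∈ ker d, if B(b, a) = 0 for all b ∈ ker d, then a lies in the image of d. -/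
/-!
The form embeds `im d` into the annihilator of `ker d` in the dual of `E`. That annihilator is the
dual of `E / ker d ≅ im d`, so it has the same finite dimension as `im d` and the embedding is onto.
Pulling the annihilator back along the form therefore gives `im d` itself, and this pullback is the
orthogonal of `ker d`.
-/

open Module

theorem orthogonalBilin_eq_comap_dualAnnihilator {R M N : Type*} [CommSemiring R]
    [AddCommMonoid M] [Module R M] [AddCommMonoid N] [Module R N]
    (B : M →ₗ[R] N →ₗ[R] R) (U : Submodule R M) :
    U.orthogonalBilin B = U.dualAnnihilator.comap B.flip := by
  ext x
  simp [Submodule.mem_dualAnnihilator]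

section Field

variable {K E F : Type*} [Field K] [AddCommGroup E] [Module K E] [AddCommGroup F] [Module K F]

theorem finrank_dualAnnihilator_eq_finrank_quotient (U : Submodule K E) :
    finrank K U.dualAnnihilator = finrank K (E ⧸ U) :=
  U.dualQuotEquivDualAnnihilator.finrank_eq.symm.trans Subspace.dual_finrank_eq

theorem eq_orthogonalBilin_of_le_of_finrank_quotient_le {B : E →ₗ[K] F →ₗ[K] K}
    (hB : B.SeparatingRight) {U : Submodule K E} [FiniteDimensional K (E ⧸ U)]
    {W : Submodule K F} (hle : W ≤ U.orthogonalBilin B)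
    (hrank : finrank K (E ⧸ U) ≤ finrank K W) :
    W = U.orthogonalBilin B := by
  have hinj : Function.Injective B.flip :=
    LinearMap.ker_eq_bot.1 (LinearMap.separatingRight_iff_flip_ker_eq_bot.1 hB)
  have : FiniteDimensional K U.dualAnnihilator :=
    U.dualQuotEquivDualAnnihilator.finiteDimensional
  rw [orthogonalBilin_eq_comap_dualAnnihilator] at hle ⊢
  have hmap : W.map B.flip = U.dualAnnihilator := by
    refine Submodule.eq_of_le_of_finrank_le (Submodule.map_le_iff_le_comap.2 hle) ?_
    rwa [finrank_dualAnnihilator_eq_finrank_quotient,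
      ← (Submodule.equivMapOfInjective B.flip hinj W).finrank_eq]
  rw [← hmap, Submodule.comap_map_eq_of_injective hinj]

theorem homology_pairing_nondegenerate_general (d : E →ₗ[K] F)
    [FiniteDimensional K (LinearMap.range d)] {B : E →ₗ[K] F →ₗ[K] K}
    (hB : B.SeparatingRight) (horth : ∀ a b : E, d a = 0 → B a (d b) = 0) :
    LinearMap.range d = (LinearMap.ker d).orthogonalBilin B := by
  have : FiniteDimensional K (E ⧸ LinearMap.ker d) :=
    d.quotKerEquivRange.symm.finiteDimensional
  refine eq_orthogonalBilin_of_le_of_finrank_quotient_le hB ?_ d.quotKerEquivRange.finrank_eq.le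
  rintro _ ⟨b, rfl⟩ a ha
  exact horth a b ha

end Field

/-- For a differential `d` on a finite-dimensional vector space with a bilinear form `B`,
nondegenerate on both sides, such that the image of `d` is orthogonal to the kernel of `d`
on both sides, `B` induces a nondegenerate pairing on the homology `ker d / im d`:
any cycle orthogonal (on either side) to all cycles is a boundary. -/
theorem homology_pairing_nondegenerate
    {K E : Type*} [Field K] [AddCommGroup E] [Module K E] [FiniteDimensional K E]
    (d : E →ₗ[K] E) (hdd : d ∘ₗ d = 0)
    (B : E →ₗ[K] E →ₗ[K] K)
    (hB₁ : ∀ a : E, (∀ b : E, B a b = 0) → a = 0)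
    (hB₂ : ∀ b : E, (∀ a : E, B a b = 0) → b = 0)
    (horth₁ : ∀ a b : E, d b = 0 → B (d a) b = 0)
    (horth₂ : ∀ a b : E, d a = 0 → B a (d b) = 0) :
    (∀ a : E, d a = 0 → (∀ b : E, d b = 0 → B a b = 0) → ∃ c : E, d c = a) ∧
      (∀ a : E, d a = 0 → (∀ b : E, d b = 0 → B b a = 0) → ∃ c : E, d c = a) := by
  exact ⟨fun _ _ h ↦
      (homology_pairing_nondegenerate_general d (B := B.flip) hB₁ fun a b ↦ horth₁ b a).ge h,
    fun _ _ h ↦ (homology_pairing_nondegenerate_general d hB₂ horth₂).ge h⟩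
end

section
/- Let A = S/I where I ⊆ S is the ideal generated by all products xᵢ·xⱼ of the variables (equivalently, the square of the maximal ideal (x₁,…,xₙ)), so that A ≅ ℂ ⊕ V with V of dimension n and zero multiplication on V. Then for every p ≥ 1 the ℂ-vector space Tor_p^S(A, ℂ) is finite-dimensional of dimension p · C(n+1, p+1) (the binomial coefficient); in particular Tor_p^S(A, ℂ) = 0 for p > n. (This is the dimension of the irreducible GL_n-module corresponding to the hook Young diagram [2,1^{p−1}].) -/
/-!
The Koszul complex of the variables of `S` is contracted by an explicit homotopy on monomial forms:
if `i` is the least index occurring in `X^m e_J`, the homotopy sends this form to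
`(X^m / X i) e_{J ∪ {i}}` when `i ∉ J` and to `0` otherwise. Hence the complex resolves `S ⧸ 𝔪`,
where `𝔪` is the ideal of the variables, and `Tor_p(A, S ⧸ 𝔪)` is the Koszul homology of `A`.

Let `A = S ⧸ 𝔪² = k ⊕ V`. A chain of positive degree with values in `A` is a cycle if and only if
its constant terms vanish, because contraction moves constant terms injectively into `V` and kills
`V`. So the differential out of degree `p` has rank `C(n, p)`, and
`dim Tor_p = (n + 1) C(n, p) - C(n, p) - C(n, p + 1) = p C(n + 1, p + 1)`.
-/

open CategoryTheory MvPolynomial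

noncomputable section

/-- The polynomial ring `S = ℂ[x₁, …, xₙ]`. -/
abbrev Spoly (n : ℕ) : Type := MvPolynomial (Fin n) ℂ

/-- The ideal generated by all products `xᵢ · xⱼ` of the variables,
i.e. the square of the maximal ideal `(x₁, …, xₙ)`. -/
abbrev squaresIdeal (n : ℕ) : Ideal (Spoly n) :=
  Ideal.span {f : Spoly n | ∃ i j : Fin n, f = X i * X j}

/-- The algebra `A = S / (xᵢxⱼ) ≅ ℂ ⊕ V` with zero multiplication on `V`. -/
abbrev Aalg (n : ℕ) : Type := Spoly n ⧸ squaresIdeal n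

/-- `ℂ` regarded as an `S`-module via the augmentation sending each variable to `0`. -/
def CC (n : ℕ) : Type := ℂ

instance (n : ℕ) : AddCommGroup (CC n) := inferInstanceAs (AddCommGroup ℂ)

noncomputable instance (n : ℕ) : Module (Spoly n) (CC n) :=
  Module.compHom ℂ (MvPolynomial.eval (fun _ : Fin n => (0 : ℂ)))

/-- The `S`-module `Tor_p^S(A, ℂ)`. -/
noncomputable def TorModule (n p : ℕ) : ModuleCat (Spoly n) :=
  ((Tor (ModuleCat.{0} (Spoly n)) p).obj (ModuleCat.of (Spoly n) (Aalg n))).obj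
    (ModuleCat.of (Spoly n) (CC n))

/-- The `ℂ`-vector space structure on `Tor_p^S(A, ℂ)`, obtained by restriction of scalars
along `ℂ → S`. -/
noncomputable instance (n p : ℕ) : Module ℂ (TorModule n p) :=
  Module.compHom (TorModule n p) (algebraMap ℂ (Spoly n))

universe u v

/-! ### Koszul contraction -/

section KoszulContraction

variable {σ : Type*} [LinearOrder σ]

/-- The sign `(-1)^#{j ∈ s | j < i}`, which for `i ∉ s` is the sign of sorting `e_i ∧ e_s` into
increasing order. -/
def koszulSign (i : σ) (s : Finset σ) : ℤ :=
  (-1) ^ (s.filter (· < i)).card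

lemma isUnit_koszulSign (i : σ) (s : Finset σ) : IsUnit (koszulSign i s) :=
  isUnit_one.neg.pow _

lemma koszulSign_eq_one {i : σ} {s : Finset σ} (h : ∀ j ∈ s, i ≤ j) : koszulSign i s = 1 := by
  simp [koszulSign, Finset.filter_eq_empty_iff.2 fun j hj => (h j hj).not_gt]

lemma koszulSign_insert {i j : σ} {s : Finset σ} (hj : j ∉ s) :
    koszulSign i (insert j s) = if j < i then -koszulSign i s else koszulSign i s := by
  unfold koszulSign
  rw [Finset.filter_insert]
  split_ifs
  · rw [Finset.card_insert_of_notMem (by simp [hj]), pow_succ, mul_neg_one]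
  · rfl

lemma koszulSign_erase {i j : σ} {s : Finset σ} (hi : i ∈ s) (hij : i < j) :
    koszulSign j (s.erase i) = -koszulSign j s := by
  conv_rhs =>
    rw [← Finset.insert_erase hi, koszulSign_insert (s.notMem_erase i), if_pos hij, neg_neg]

lemma koszulSign_swap {i j : σ} {s : Finset σ} (hij : i ≠ j) (hi : i ∉ s) (hj : j ∉ s) :
    koszulSign i s * koszulSign j (insert i s) = -(koszulSign j s * koszulSign i (insert j s)) := by
  rw [koszulSign_insert hi, koszulSign_insert hj]
  rcases lt_or_gt_of_ne hij with h | h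
  · rw [if_pos h, if_neg h.le.not_gt]; ring
  · rw [if_neg h.le.not_gt, if_pos h]; ring

variable [Fintype σ] {R : Type*} [CommRing R] (x : σ → R) (M : Type*) [AddCommGroup M] [Module R M]

/-- Contraction with `x` on `M ⊗ Λ(R^σ)`, the Koszul differential in all degrees at once. An element
`∑ f J ⊗ e_J` of that module is encoded as the function `f` on finite sets of indices. -/
def koszulContraction : (Finset σ → M) →ₗ[R] (Finset σ → M) :=
  LinearMap.pi fun J => ∑ i ∈ Jᶜ, koszulSign i J • x i • LinearMap.proj (insert i J)

variable {M}

lemma koszulContraction_apply (f : Finset σ → M) (J : Finset σ) :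
    koszulContraction x M f J = ∑ i ∈ Jᶜ, koszulSign i J • x i • f (insert i J) := by
  simp [koszulContraction]

lemma koszulContraction_koszulContraction (f : Finset σ → M) :
    koszulContraction x M (koszulContraction x M f) = 0 := by
  funext J
  have expand : koszulContraction x M (koszulContraction x M f) J =
      ∑ q ∈ Jᶜ.sigma fun i => (insert i J)ᶜ, (koszulSign q.1 J * koszulSign q.2 (insert q.1 J)) •
        (x q.1 * x q.2) • f (insert q.2 (insert q.1 J)) := by
    simp only [koszulContraction_apply, Finset.smul_sum, Finset.sum_sigma, mul_smul,
      smul_comm (x _) (koszulSign _ _)]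
  rw [expand, Pi.zero_apply]
  -- Exchanging the two contracted indices reverses the sign.
  refine Finset.sum_involution (fun q _ => ⟨q.2, q.1⟩) ?_ ?_ ?_ fun _ _ => rfl
  · rintro ⟨i, j⟩ hij
    simp only [Finset.mem_sigma, Finset.mem_compl, Finset.mem_insert, not_or] at hij
    rw [koszulSign_swap (Ne.symm hij.2.1) hij.1 hij.2.2, mul_comm (x i), Finset.insert_comm,
      neg_smul, neg_add_cancel]
  · rintro ⟨i, j⟩ hij - h
    simp_all
  · rintro ⟨i, j⟩ hij
    simp_all [eq_comm]

end KoszulContraction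

/-! ### The contracting homotopy -/

section Homotopy

variable {σ : Type*} [LinearOrder σ] {k : Type*} [CommRing k]

/-- The quotient by `X i` of the part of `f` consisting of the monomials that are divisible by
`X i` but by no earlier variable. -/
def divLeadingX (i : σ) (f : MvPolynomial σ k) : MvPolynomial σ k :=
  ∑ m ∈ (f.divMonomial (.single i 1)).support with ∀ j ∈ m.support, i ≤ j,
    monomial m (coeff m (f.divMonomial (.single i 1)))

lemma coeff_divLeadingX (i : σ) (f : MvPolynomial σ k) (m : σ →₀ ℕ) :
    coeff m (divLeadingX i f) =
      if ∀ j ∈ m.support, i ≤ j then coeff (.single i 1 + m) f else 0 := by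
  simp only [divLeadingX, coeff_sum, coeff_monomial, Finset.sum_ite_eq', Finset.mem_filter,
    mem_support_iff, ← coeff_divMonomial]
  split_ifs <;> simp_all

/-- On the basis of monomial forms `X^m e_J` this sends `X^m e_J` to `(X^m / X i) e_{J ∪ {i}}` if
the least index `i` occurring in `m` or `J` is not in `J`, and to `0` otherwise. -/
def koszulHomotopy (f : Finset σ → MvPolynomial σ k) (J : Finset σ) : MvPolynomial σ k :=
  if hJ : J.Nonempty then divLeadingX (J.min' hJ) (f (J.erase (J.min' hJ))) else 0

lemma koszulHomotopy_zero : koszulHomotopy (0 : Finset σ → MvPolynomial σ k) = 0 := by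
  funext J
  ext m
  simp [koszulHomotopy, apply_dite (coeff m), coeff_divLeadingX]

lemma coeff_koszulHomotopy_of_isLeast {i : σ} {J : Finset σ} {m : σ →₀ ℕ}
    (f : Finset σ → MvPolynomial σ k) (hJ : IsLeast (J : Set σ) i) (hm : ∀ j ∈ m.support, i ≤ j) :
    coeff m (koszulHomotopy f J) = coeff (.single i 1 + m) (f (J.erase i)) := by
  have hne : J.Nonempty := ⟨i, hJ.1⟩
  obtain rfl : J.min' hne = i := (J.isLeast_min' hne).unique hJ
  rw [koszulHomotopy, dif_pos hne, coeff_divLeadingX, if_pos hm]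

lemma coeff_koszulHomotopy_of_lt {i : σ} {J : Finset σ} {m : σ →₀ ℕ}
    (f : Finset σ → MvPolynomial σ k) (hJ : ∀ j ∈ J, i < j) (hm : i ∈ m.support) :
    coeff m (koszulHomotopy f J) = 0 := by
  rw [koszulHomotopy]
  split_ifs with hne
  · rw [coeff_divLeadingX, if_neg fun h => ((hJ _ (J.min'_mem hne)).not_ge (h i hm))]
  · exact coeff_zero m

variable [Fintype σ]

lemma coeff_koszulContraction_X (f : Finset σ → MvPolynomial σ k) (J : Finset σ) (m : σ →₀ ℕ) :
    coeff m (koszulContraction (X (R := k)) _ f J) = ∑ i ∈ Jᶜ,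
      koszulSign i J • if i ∈ m.support then coeff (m - .single i 1) (f (insert i J)) else 0 := by
  simp only [koszulContraction_apply, coeff_sum, coeff_smul, smul_eq_mul, coeff_X_mul']

lemma coeff_koszulHomotopy_add_of_isLeast_left {i : σ} {J : Finset σ} {m : σ →₀ ℕ}
    (f : Finset σ → MvPolynomial σ k) (hJ : IsLeast (J : Set σ) i) (hm : ∀ j ∈ m.support, i ≤ j) :
    coeff m (koszulContraction (X (R := k)) _ (koszulHomotopy f) J) +
      coeff m (koszulHomotopy (koszulContraction (X (R := k)) _ f) J) = coeff m (f J) := by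
  have hiJ : i ∈ J := hJ.1
  have cancel : ∀ j ∈ Jᶜ, koszulSign j J • (if j ∈ m.support then
        coeff (m - .single j 1) (koszulHomotopy f (insert j J)) else 0) +
      koszulSign j (J.erase i) • (if j ∈ (.single i 1 + m : σ →₀ ℕ).support then
        coeff (.single i 1 + m - .single j 1) (f (insert j (J.erase i))) else 0) = 0 := by
    intro j hj
    have hji : i ≠ j := by rintro rfl; simp_all
    by_cases hjm : j ∈ m.support
    · have hij : i < j := (hm j hjm).lt_of_ne hji
      have hleast : IsLeast (insert j J : Finset σ) i := by
        simpa [IsLeast, mem_lowerBounds, hiJ, hij.le] using hJ.2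
      have hm' : ∀ l ∈ (m - .single j 1).support, i ≤ l := fun l hl =>
        hm l (Finsupp.support_tsub hl)
      have hle : Finsupp.single j 1 ≤ m := by
        simpa [Nat.one_le_iff_ne_zero] using hjm
      rw [if_pos hjm, if_pos (by simp_all), coeff_koszulHomotopy_of_isLeast f hleast hm',
        koszulSign_erase hiJ hij, Finset.erase_insert_of_ne hji.symm, add_tsub_assoc_of_le hle,
        neg_smul, add_neg_cancel]
    · rw [if_neg hjm, if_neg (by simp_all), smul_zero, smul_zero, add_zero]
  rw [coeff_koszulHomotopy_of_isLeast _ hJ hm, coeff_koszulContraction_X,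
    coeff_koszulContraction_X, Finset.compl_erase, Finset.sum_insert (by simpa using hiJ),
    koszulSign_eq_one fun j hj => hJ.2 (Finset.mem_of_mem_erase hj), Finset.insert_erase hiJ,
    add_left_comm, ← Finset.sum_add_distrib, Finset.sum_eq_zero cancel]
  simp

lemma coeff_koszulHomotopy_add_of_isLeast_right {i : σ} {J : Finset σ} {m : σ →₀ ℕ}
    (f : Finset σ → MvPolynomial σ k) (hJ : ∀ j ∈ J, i < j) (hi : i ∈ m.support)
    (hm : ∀ j ∈ m.support, i ≤ j) :
    coeff m (koszulContraction (X (R := k)) _ (koszulHomotopy f) J) +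
      coeff m (koszulHomotopy (koszulContraction (X (R := k)) _ f) J) = coeff m (f J) := by
  have hiJ : i ∉ J := fun h => (hJ i h).false
  have hle : Finsupp.single i 1 ≤ m := by
    simpa [Nat.one_le_iff_ne_zero] using hi
  have hleast : IsLeast (insert i J : Finset σ) i := by
    simpa [IsLeast, mem_lowerBounds] using fun j hj => (hJ j hj).le
  rw [coeff_koszulHomotopy_of_lt _ hJ hi, add_zero, coeff_koszulContraction_X,
    Finset.sum_eq_single_of_mem i (by simpa using hiJ), if_pos hi,
    koszulSign_eq_one fun j hj => (hJ j hj).le, one_smul,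
    coeff_koszulHomotopy_of_isLeast f hleast fun j hj => hm j (Finsupp.support_tsub hj),
    add_tsub_cancel_of_le hle, Finset.erase_insert hiJ]
  intro j _ hji
  split_ifs with hj
  · rw [coeff_koszulHomotopy_of_lt (i := i), smul_zero]
    · simpa using ⟨(hm j hj).lt_of_ne hji.symm, hJ⟩
    · simpa [hji] using hi
  · exact smul_zero _

theorem koszulContraction_koszulHomotopy_add (f : Finset σ → MvPolynomial σ k) (J : Finset σ) :
    koszulContraction (X (R := k)) _ (koszulHomotopy f) J +
        koszulHomotopy (koszulContraction (X (R := k)) _ f) J =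
      f J - if J = ∅ then C (coeff 0 (f ∅)) else 0 := by
  ext m
  rw [coeff_add]
  by_cases hne : (J ∪ m.support).Nonempty
  · obtain ⟨i, hi⟩ : ∃ i, IsLeast ((J ∪ m.support : Finset σ) : Set σ) i :=
      ⟨_, Finset.isLeast_min' _ hne⟩
    have hm : ∀ j ∈ m.support, i ≤ j := fun j hj => hi.2 (by simp_all)
    have hJ : ∀ j ∈ J, i ≤ j := fun j hj => hi.2 (by simp_all)
    have const : coeff m (if J = ∅ then C (coeff 0 (f ∅)) else 0) = 0 := by
      split_ifs
      · simp_all [coeff_C, eq_comm (a := (0 : σ →₀ ℕ))]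
      · rfl
    rw [coeff_sub, const, sub_zero]
    by_cases hiJ : i ∈ J
    · exact coeff_koszulHomotopy_add_of_isLeast_left f ⟨hiJ, hJ⟩ hm
    · exact coeff_koszulHomotopy_add_of_isLeast_right f
        (fun j hj => (hJ j hj).lt_of_ne (ne_of_mem_of_not_mem hj hiJ).symm)
        ((Finset.mem_union.1 hi.1).resolve_left hiJ) hm
  · obtain ⟨rfl, rfl⟩ : J = ∅ ∧ m = 0 := by simpa using hne
    simp [coeff_koszulContraction_X, koszulHomotopy]

lemma koszulContraction_koszulHomotopy {f : Finset σ → MvPolynomial σ k}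
    (hf : koszulContraction (X (R := k)) _ f = 0) (h0 : coeff 0 (f ∅) = 0) :
    koszulContraction (X (R := k)) _ (koszulHomotopy f) = f := by
  funext J
  have h := koszulContraction_koszulHomotopy_add f J
  rwa [hf, koszulHomotopy_zero, Pi.zero_apply, add_zero, h0, C_0, ite_self, sub_zero] at h

end Homotopy

/-! ### The Koszul complex -/

section Graded

variable {σ : Type*}

/-- Inclusion of the degree `p` part `M ⊗ Λ^p(R^σ)` into `M ⊗ Λ(R^σ)`, as extension by zero. -/
def extendByZero (R : Type*) [CommRing R] (p : ℕ) (M : Type*) [AddCommGroup M] [Module R M] :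
    (Set.powersetCard σ p → M) →ₗ[R] (Finset σ → M) :=
  LinearMap.pi fun J => if hJ : J.card = p then LinearMap.proj ⟨J, hJ⟩ else 0

variable {R : Type*} [CommRing R] {p : ℕ} {M : Type*} [AddCommGroup M] [Module R M]

lemma extendByZero_of_card_eq (f : Set.powersetCard σ p → M) {J : Finset σ} (hJ : J.card = p) :
    extendByZero R p M f J = f ⟨J, hJ⟩ := by
  simp [extendByZero, hJ]

lemma extendByZero_of_card_ne (f : Set.powersetCard σ p → M) {J : Finset σ} (hJ : J.card ≠ p) :
    extendByZero R p M f J = 0 := by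
  simp [extendByZero, hJ]

lemma extendByZero_coe (f : Set.powersetCard σ p → M) (J : Set.powersetCard σ p) :
    extendByZero R p M f J = f J :=
  extendByZero_of_card_eq f J.2

lemma extendByZero_injective : Function.Injective (extendByZero (σ := σ) R p M) := by
  intro f g h
  funext J
  rw [← extendByZero_coe (R := R) f, h, extendByZero_coe]

variable [LinearOrder σ] [Fintype σ]

/-- The Koszul differential `M ⊗ Λ^{p+1}(R^σ) → M ⊗ Λ^p(R^σ)` of the sequence `x`. -/
def koszulDifferential (x : σ → R) (p : ℕ) (M : Type*) [AddCommGroup M] [Module R M] :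
    (Set.powersetCard σ (p + 1) → M) →ₗ[R] (Set.powersetCard σ p → M) :=
  LinearMap.funLeft R M Subtype.val ∘ₗ koszulContraction x M ∘ₗ extendByZero R (p + 1) M

variable (x : σ → R)

lemma koszulDifferential_apply (f : Set.powersetCard σ (p + 1) → M) (J : Set.powersetCard σ p) :
    koszulDifferential x p M f J = koszulContraction x M (extendByZero R (p + 1) M f) J :=
  rfl

lemma koszulDifferential_restrict (f : Finset σ → M) :
    koszulDifferential x p M (fun J => f J) =
      fun J : Set.powersetCard σ p => koszulContraction x M f J := by
  funext J
  rw [koszulDifferential_apply, koszulContraction_apply, koszulContraction_apply]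
  refine Finset.sum_congr rfl fun i hi => ?_
  rw [extendByZero_of_card_eq _
    (by rw [Finset.card_insert_of_notMem (Finset.mem_compl.1 hi), Set.powersetCard.card_eq J])]

lemma extendByZero_koszulDifferential (f : Set.powersetCard σ (p + 1) → M) :
    extendByZero R p M (koszulDifferential x p M f) =
      koszulContraction x M (extendByZero R (p + 1) M f) := by
  funext J
  by_cases hJ : J.card = p
  · rw [extendByZero_of_card_eq _ hJ, koszulDifferential_apply]
  · rw [extendByZero_of_card_ne _ hJ, koszulContraction_apply]
    refine (Finset.sum_eq_zero fun i hi => ?_).symm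
    rw [extendByZero_of_card_ne, smul_zero, smul_zero]
    rwa [Finset.card_insert_of_notMem (Finset.mem_compl.1 hi), Ne, Nat.add_left_inj]

lemma koszulDifferential_koszulDifferential (f : Set.powersetCard σ (p + 2) → M) :
    koszulDifferential x p M (koszulDifferential x (p + 1) M f) = 0 :=
  extendByZero_injective (R := R) <| by
    rw [extendByZero_koszulDifferential, extendByZero_koszulDifferential,
      koszulContraction_koszulContraction, map_zero]

end Graded

section Exactness

variable {σ : Type*} {k : Type*} [CommRing k]

variable (σ k) in
/-- The augmentation `S ⊗ Λ^0(S^σ) = S → S ⧸ (X i | i ∈ σ)` of the Koszul complex of the variables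
of the polynomial ring `S`. -/
def koszulAugmentation : (Set.powersetCard σ 0 → MvPolynomial σ k) →ₗ[MvPolynomial σ k]
    MvPolynomial σ k ⧸ idealOfVars σ k :=
  (idealOfVars σ k).mkQ ∘ₗ LinearMap.proj ⟨∅, Finset.card_empty⟩

lemma koszulAugmentation_surjective : Function.Surjective (koszulAugmentation σ k) :=
  (Submodule.mkQ_surjective _).comp
    (Function.surjective_eval (β := fun _ => MvPolynomial σ k)
      (⟨∅, Finset.card_empty⟩ : Set.powersetCard σ 0))

lemma mem_idealOfVars_iff {f : MvPolynomial σ k} : f ∈ idealOfVars σ k ↔ coeff 0 f = 0 := by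
  rw [← pow_one (idealOfVars σ k), mem_pow_idealOfVars_iff']
  simp [Finsupp.degree_eq_zero_iff]

lemma koszulAugmentation_eq_zero_iff {f : Set.powersetCard σ 0 → MvPolynomial σ k} :
    koszulAugmentation σ k f = 0 ↔ coeff 0 (f ⟨∅, Finset.card_empty⟩) = 0 := by
  rw [koszulAugmentation, LinearMap.comp_apply, Submodule.mkQ_apply, Submodule.Quotient.mk_eq_zero,
    mem_idealOfVars_iff, LinearMap.proj_apply]

variable [LinearOrder σ] [Fintype σ]

lemma exists_koszulDifferential_X_eq {p : ℕ} {f : Set.powersetCard σ p → MvPolynomial σ k}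
    (cycle : koszulContraction (X (R := k)) _ (extendByZero (MvPolynomial σ k) p _ f) = 0)
    (const : coeff 0 (extendByZero (MvPolynomial σ k) p _ f ∅) = 0) :
    ∃ g, koszulDifferential (X (R := k)) p _ g = f := by
  refine ⟨fun J => koszulHomotopy (extendByZero (MvPolynomial σ k) p _ f) J, ?_⟩
  rw [koszulDifferential_restrict, koszulContraction_koszulHomotopy cycle const]
  exact funext (extendByZero_coe f)

lemma koszulDifferential_X_exact (p : ℕ) :
    Function.Exact (koszulDifferential (X : σ → MvPolynomial σ k) (p + 1) (MvPolynomial σ k))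
      (koszulDifferential (X : σ → MvPolynomial σ k) p (MvPolynomial σ k)) := by
  refine fun f => ⟨fun hf => exists_koszulDifferential_X_eq (f := f) ?_ ?_, ?_⟩
  · rw [← extendByZero_koszulDifferential, hf, map_zero]
  · rw [extendByZero_of_card_ne f (by simp), coeff_zero]
  · rintro ⟨g, rfl⟩
    exact koszulDifferential_koszulDifferential _ g

lemma koszulDifferential_X_exact_koszulAugmentation :
    Function.Exact (koszulDifferential (X (R := k)) 0 (MvPolynomial σ k))
      (koszulAugmentation σ k) := by
  refine fun f => ⟨fun hf => exists_koszulDifferential_X_eq (f := f) ?_ ?_, ?_⟩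
  · funext J
    rw [koszulContraction_apply]
    refine Finset.sum_eq_zero fun i _ => ?_
    rw [extendByZero_of_card_ne f (by simp), smul_zero, smul_zero]
  · rw [extendByZero_of_card_eq f Finset.card_empty, koszulAugmentation_eq_zero_iff.1 hf]
  · rintro ⟨g, rfl⟩
    rw [koszulAugmentation_eq_zero_iff, koszulDifferential_apply, coeff_koszulContraction_X]
    simp

end Exactness

/-! ### Tor through the Koszul resolution -/

/-- The homology of a short complex of modules, as cycles modulo boundaries. -/
def homologyEquivCyclesModBoundaries {R : Type u} [Ring R] (K : ShortComplex (ModuleCat.{v} R)) :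
    K.homology ≃ₗ[R]
      LinearMap.ker K.g.hom ⧸ (LinearMap.range K.f.hom).submoduleOf (LinearMap.ker K.g.hom) :=
  K.moduleCatHomologyIso.toLinearEquiv ≪≫ₗ
    Submodule.quotEquivOfEq _ _ (LinearMap.range_codRestrict _ _ _)

section Complex

variable {σ : Type u} [LinearOrder σ] [Fintype σ] {R : Type (max u v)} [CommRing R] (x : σ → R)

/-- The Koszul complex of the sequence `x` with coefficients in `M`. -/
def koszulComplex (M : Type (max u v)) [AddCommGroup M] [Module R M] :
    ChainComplex (ModuleCat.{max u v} R) ℕ :=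
  ChainComplex.of (fun p => ModuleCat.of R (Set.powersetCard σ p → M))
    (fun p => ModuleCat.ofHom (koszulDifferential x p M))
    (fun _ => ModuleCat.hom_ext (LinearMap.ext (koszulDifferential_koszulDifferential x)))

variable (M : Type (max u v)) [AddCommGroup M] [Module R M]

lemma koszulComplex_d (p : ℕ) :
    (koszulComplex x M).d (p + 1) p = ModuleCat.ofHom (koszulDifferential x p M) := by
  simp [koszulComplex]

open TensorProduct in
lemma piScalarRight_lTensor_koszulDifferential (p : ℕ)
    (t : M ⊗[R] (Set.powersetCard σ (p + 1) → R)) :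
    piScalarRight R R M _ ((koszulDifferential x p R).lTensor M t) =
      koszulDifferential x p M (piScalarRight R R M _ t) := by
  induction t with
  | zero => simp only [map_zero]
  | add t t' ht ht' => simp only [map_add, ht, ht']
  | tmul m f =>
    rw [LinearMap.lTensor_tmul, piScalarRight_apply, piScalarRight_apply, piScalarRightHom_tmul,
      piScalarRightHom_tmul]
    funext J
    rw [koszulDifferential_apply, koszulDifferential_apply, koszulContraction_apply,
      koszulContraction_apply, Finset.sum_smul]
    refine Finset.sum_congr rfl fun i hi => ?_
    have card_insert : (insert i J.1).card = p + 1 := by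
      rw [Finset.card_insert_of_notMem (Finset.mem_compl.1 hi), Set.powersetCard.card_eq J]
    rw [extendByZero_of_card_eq _ card_insert, extendByZero_of_card_eq _ card_insert, smul_assoc,
      smul_assoc]

/-- Tensoring the Koszul complex with `M` gives the Koszul complex with coefficients in `M`. -/
def tensorKoszulComplexIso :
    (((MonoidalCategory.tensoringLeft (ModuleCat.{max u v} R)).obj
      (ModuleCat.of R M)).mapHomologicalComplex _).obj (koszulComplex x R) ≅ koszulComplex x M :=
  HomologicalComplex.Hom.isoOfComponents
    (fun p => (TensorProduct.piScalarRight R R M (Set.powersetCard σ p)).toModuleIso) <| by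
    rintro _ p rfl
    rw [Functor.mapHomologicalComplex_obj_d, koszulComplex_d, koszulComplex_d]
    exact ModuleCat.hom_ext (LinearMap.ext fun t =>
      (piScalarRight_lTensor_koszulDifferential x M p t).symm)

lemma koszulComplex_sc' (p : ℕ) :
    (koszulComplex x M).sc' (p + 2) (p + 1) p =
      .mk (ModuleCat.ofHom (koszulDifferential x (p + 1) M))
        (ModuleCat.ofHom (koszulDifferential x p M))
        (ModuleCat.hom_ext (LinearMap.ext (koszulDifferential_koszulDifferential x))) := by
  simp only [HomologicalComplex.sc', HomologicalComplex.shortComplexFunctor', koszulComplex_d]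
  rfl

end Complex

section Resolution

variable (σ : Type u) [LinearOrder σ] [Fintype σ] (k : Type v) [CommRing k]

/-- The Koszul complex of the variables of the polynomial ring `S`, as a resolution of
`S ⧸ (X i | i ∈ σ)`. -/
def koszulResolution : ProjectiveResolution (ModuleCat.of (MvPolynomial σ k)
    (MvPolynomial σ k ⧸ idealOfVars σ k)) where
  complex := koszulComplex.{u, v} X (MvPolynomial σ k)
  projective p := inferInstanceAs
    (Projective (ModuleCat.of (MvPolynomial σ k) (Set.powersetCard σ p → MvPolynomial σ k)))
  π := (ChainComplex.toSingle₀Equiv _ _).symm ⟨ModuleCat.ofHom (koszulAugmentation σ k), by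
    rw [koszulComplex_d]
    exact ModuleCat.hom_ext (LinearMap.ext
      koszulDifferential_X_exact_koszulAugmentation.apply_apply_eq_zero)⟩
  quasiIso := ⟨fun p => by
    cases p with
    | zero =>
      rw [ChainComplex.quasiIsoAt₀_iff, ShortComplex.quasiIso_iff_of_zeros']
      · constructor
        · rw [ShortComplex.ShortExact.moduleCat_exact_iff_function_exact]
          exact koszulDifferential_X_exact_koszulAugmentation
        · exact (ModuleCat.epi_iff_surjective _).2 koszulAugmentation_surjective
      all_goals rfl
    | succ p =>
      rw [quasiIsoAt_iff_exactAt']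
      · rw [HomologicalComplex.exactAt_iff' _ (p + 2) (p + 1) p (by simp) (by simp),
          koszulComplex_sc', ShortComplex.ShortExact.moduleCat_exact_iff_function_exact]
        exact koszulDifferential_X_exact p
      · apply ChainComplex.exactAt_succ_single_obj⟩

variable (M : Type (max u v)) [AddCommGroup M] [Module (MvPolynomial σ k) M]

/-- `Tor_p^S(M, S ⧸ (X i | i ∈ σ))` is the Koszul homology of `M`. -/
def torIsoKoszulHomology (p : ℕ) :
    ((Tor (ModuleCat.{max u v} (MvPolynomial σ k)) p).obj (ModuleCat.of _ M)).obj
      (ModuleCat.of _ (MvPolynomial σ k ⧸ idealOfVars σ k)) ≅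
    (koszulComplex (X (R := k) (σ := σ)) M).homology p :=
  (koszulResolution σ k).isoLeftDerivedObj _ p ≪≫
    HomologicalComplex.homologyMapIso (tensorKoszulComplexIso X M) p

end Resolution

/-! ### Dimension of homology -/

lemma finrank_range_of_ker_eq_ker {k R M N P : Type*} [CommRing k] [CommRing R] [Algebra k R]
    [AddCommGroup M] [Module R M] [Module k M] [IsScalarTower k R M]
    [AddCommGroup N] [Module R N] [Module k N] [IsScalarTower k R N]
    [AddCommGroup P] [Module k P] {g : M →ₗ[R] N} {φ : M →ₗ[k] P} (hφ : Function.Surjective φ)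
    (hker : LinearMap.ker (g.restrictScalars k) = LinearMap.ker φ) :
    Module.finrank k (LinearMap.range g) = Module.finrank k P :=
  ((g.restrictScalars k).quotKerEquivRange.symm.trans
    ((Submodule.quotEquivOfEq _ _ hker).trans
      (φ.quotKerEquivOfSurjective hφ))).finrank_eq

section Dimension

variable {k R M₁ M₂ M₃ H : Type*} [Field k] [CommRing R] [Algebra k R]
  [AddCommGroup M₁] [Module R M₁]
  [AddCommGroup M₂] [Module R M₂] [Module k M₂] [IsScalarTower k R M₂]
  [Module.Finite k M₂] [AddCommGroup M₃] [Module R M₃]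
  [AddCommMonoid H] [Module R H] [Module k H] [IsScalarTower k R H]
  {f : M₁ →ₗ[R] M₂} {g : M₂ →ₗ[R] M₃}

lemma finite_of_equiv_cycles_mod_boundaries
    (e : H ≃ₗ[R] LinearMap.ker g ⧸ (LinearMap.range f).submoduleOf (LinearMap.ker g)) :
    Module.Finite k H := by
  have : Module.Finite k (LinearMap.ker g) :=
    inferInstanceAs (Module.Finite k ((LinearMap.ker g).restrictScalars k))
  exact Module.Finite.of_surjective
    ((e.symm.toLinearMap ∘ₗ Submodule.mkQ _).restrictScalars k)
    (e.symm.surjective.comp (Submodule.mkQ_surjective _))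

lemma finrank_add_finrank_range_add_finrank_range [Module k M₃] [IsScalarTower k R M₃]
    (e : H ≃ₗ[R] LinearMap.ker g ⧸ (LinearMap.range f).submoduleOf (LinearMap.ker g))
    (hgf : ∀ x, g (f x) = 0) :
    Module.finrank k H + Module.finrank k (LinearMap.range f) +
      Module.finrank k (LinearMap.range g) = Module.finrank k M₂ := by
  have range_le_ker : LinearMap.range f ≤ LinearMap.ker g := by
    rintro _ ⟨x, rfl⟩
    exact hgf x
  let B := (LinearMap.range f).submoduleOf (LinearMap.ker g)
  have : Module.Finite k (LinearMap.ker g) :=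
    inferInstanceAs (Module.Finite k ((LinearMap.ker g).restrictScalars k))
  have homology : Module.finrank k H =
      Module.finrank k (LinearMap.ker g ⧸ B.restrictScalars k) :=
    ((e.restrictScalars k).trans
      (Submodule.Quotient.restrictScalarsEquiv k B).symm).finrank_eq
  have boundaries : Module.finrank k (LinearMap.range f) =
      Module.finrank k (B.restrictScalars k) :=
    ((Submodule.submoduleOfEquivOfLe range_le_ker).restrictScalars k).symm.finrank_eq
  have cycles : Module.finrank k (LinearMap.range g) + Module.finrank k (LinearMap.ker g) =
      Module.finrank k M₂ :=
    (g.restrictScalars k).finrank_range_add_finrank_ker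
  rw [homology, boundaries, Submodule.finrank_quotient_add_finrank, add_comm, cycles]

end Dimension

/-! ### The algebra of polynomials modulo quadrics -/

section SquareZero

variable {σ : Type*} {k : Type*} [CommRing k]

variable (σ k) in
/-- The polynomial ring modulo all products of two variables. -/
abbrev SquareZeroAlgebra : Type _ := MvPolynomial σ k ⧸ idealOfVars σ k ^ 2

variable (σ k) in
/-- The constant and the linear coefficients of a polynomial. -/
def oneJet : MvPolynomial σ k →ₗ[k] k × (σ → k) :=
  (lcoeff k 0).prod (LinearMap.pi fun i => lcoeff k (.single i 1))

lemma oneJet_apply (f : MvPolynomial σ k) :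
    oneJet σ k f = (coeff 0 f, fun i => coeff (.single i 1) f) :=
  rfl

lemma mem_idealOfVars_sq_iff {f : MvPolynomial σ k} :
    f ∈ idealOfVars σ k ^ 2 ↔ oneJet σ k f = 0 := by
  rw [mem_pow_idealOfVars_iff', oneJet_apply, Prod.mk_eq_zero, funext_iff]
  refine ⟨fun h => ⟨h 0 (by simp), fun i => h _ (by simp)⟩, fun ⟨h₀, h₁⟩ m hm => ?_⟩
  obtain hm | hm := Nat.lt_succ_iff_lt_or_eq.1 hm
  · rwa [(Finsupp.degree_eq_zero_iff m).1 (Nat.lt_one_iff.1 hm)]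
  · obtain ⟨i, rfl⟩ := Finsupp.range_single_one.ge hm
    exact h₁ i

variable [Finite σ]

lemma oneJet_surjective : Function.Surjective (oneJet σ k) := by
  classical
  cases nonempty_fintype σ
  rintro ⟨c, v⟩
  refine ⟨C c + ∑ i, C (v i) * X i, ?_⟩
  rw [oneJet_apply]
  ext j
  · simp [coeff_sum]
  · simp [coeff_sum, coeff_C_mul, coeff_X, Finsupp.single_left_inj, coeff_C,
      eq_comm (a := (0 : σ →₀ ℕ))]

variable (σ k) in
/-- The decomposition of the polynomial ring modulo quadrics into degrees `0` and `1`. -/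
def squareZeroEquiv : SquareZeroAlgebra σ k ≃ₗ[k] k × (σ → k) :=
  (Submodule.Quotient.restrictScalarsEquiv k (idealOfVars σ k ^ 2)).symm ≪≫ₗ
    Submodule.quotEquivOfEq _ _ (Submodule.ext fun _ => mem_idealOfVars_sq_iff) ≪≫ₗ
    (oneJet σ k).quotKerEquivOfSurjective oneJet_surjective

lemma squareZeroEquiv_X_smul [DecidableEq σ] (i : σ) (a : SquareZeroAlgebra σ k) :
    squareZeroEquiv σ k ((X i : MvPolynomial σ k) • a) =
      (0, Pi.single i (squareZeroEquiv σ k a).1) := by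
  obtain ⟨f, rfl⟩ := Ideal.Quotient.mk_surjective a
  change oneJet σ k (X i * f) = (0, Pi.single i (coeff 0 f))
  rw [oneJet_apply]
  ext j
  · simp [coeff_X_mul']
  · obtain rfl | hij := eq_or_ne i j <;> simp_all [coeff_X_mul']

instance : Module.Finite k (SquareZeroAlgebra σ k) :=
  Module.Finite.equiv (squareZeroEquiv σ k).symm

instance : Module.Free k (SquareZeroAlgebra σ k) :=
  Module.Free.of_equiv (squareZeroEquiv σ k).symm

end SquareZero

section SquareZeroKoszul

variable {σ : Type*} [Fintype σ] {k : Type*} [CommRing k]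

lemma finrank_squareZeroAlgebra [Nontrivial k] :
    Module.finrank k (SquareZeroAlgebra σ k) = Fintype.card σ + 1 := by
  rw [(squareZeroEquiv σ k).finrank_eq, Module.finrank_prod, Module.finrank_self,
    Module.finrank_fintype_fun_eq_card, add_comm]

variable (σ k) in
/-- The projection of Koszul chains to their constant terms. -/
def constantTerms (p : ℕ) :
    (Set.powersetCard σ p → SquareZeroAlgebra σ k) →ₗ[k] (Set.powersetCard σ p → k) :=
  (LinearMap.fst k k (σ → k) ∘ₗ (squareZeroEquiv σ k).toLinearMap).compLeft _

lemma constantTerms_surjective (p : ℕ) : Function.Surjective (constantTerms σ k p) :=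
  Function.Surjective.comp_left (Prod.fst_surjective.comp (squareZeroEquiv σ k).surjective)

lemma card_powersetCard (p : ℕ) :
    Fintype.card (Set.powersetCard σ p) = (Fintype.card σ).choose p := by
  rw [← Nat.card_eq_fintype_card, Set.powersetCard.card, Nat.card_eq_fintype_card]

lemma finrank_koszulChains [Nontrivial k] (p : ℕ) :
    Module.finrank k (Set.powersetCard σ p → SquareZeroAlgebra σ k) =
      (Fintype.card σ).choose p * (Fintype.card σ + 1) := by
  rw [Module.finrank_pi_fintype, Finset.sum_const, Finset.card_univ, card_powersetCard,
    finrank_squareZeroAlgebra, smul_eq_mul]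

variable [LinearOrder σ]

lemma squareZeroEquiv_koszulContraction (f : Finset σ → SquareZeroAlgebra σ k) (J : Finset σ) :
    squareZeroEquiv σ k (koszulContraction (X (R := k)) _ f J) = (0, fun i =>
      if i ∈ J then 0 else koszulSign i J • (squareZeroEquiv σ k (f (insert i J))).1) := by
  simp only [koszulContraction_apply, map_sum, map_zsmul, squareZeroEquiv_X_smul]
  ext i
  · simp [Prod.fst_sum]
  · simp [Prod.snd_sum, Finset.sum_apply, Pi.single_apply]

lemma koszulContraction_X_eq_zero_iff {f : Finset σ → SquareZeroAlgebra σ k} :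
    koszulContraction (X (R := k)) _ f = 0 ↔
      ∀ J : Finset σ, J.Nonempty → (squareZeroEquiv σ k (f J)).1 = 0 := by
  refine ⟨fun h J ⟨i, hi⟩ => ?_, fun h => ?_⟩
  · have coeff_X := congrArg Prod.snd (squareZeroEquiv_koszulContraction f (J.erase i))
    rw [h, Pi.zero_apply, map_zero] at coeff_X
    have coeff_X_i : 0 = koszulSign i (J.erase i) • (squareZeroEquiv σ k (f J)).1 := by
      simpa only [J.notMem_erase, if_false, Finset.insert_erase hi, Prod.snd_zero,
        Pi.zero_apply] using congrFun coeff_X i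
    exact (isUnit_koszulSign i _).smul_eq_zero.1 coeff_X_i.symm
  · funext J
    apply (squareZeroEquiv σ k).injective
    rw [squareZeroEquiv_koszulContraction, Pi.zero_apply, map_zero]
    simp only [h _ (Finset.insert_nonempty _ J), smul_zero, ite_self]
    rfl

lemma ker_koszulDifferential_X (p : ℕ) :
    LinearMap.ker ((koszulDifferential (X (R := k)) p (SquareZeroAlgebra σ k)).restrictScalars k) =
      LinearMap.ker (constantTerms σ k (p + 1)) := by
  ext f
  rw [LinearMap.mem_ker, LinearMap.mem_ker, LinearMap.restrictScalars_apply,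
    ← (extendByZero_injective (R := MvPolynomial σ k)).eq_iff, extendByZero_koszulDifferential,
    map_zero, koszulContraction_X_eq_zero_iff, funext_iff]
  refine ⟨fun h J => ?_, fun h J _ => ?_⟩
  · have constant_term := h J (Finset.card_pos.1 (by simp))
    rwa [extendByZero_coe] at constant_term
  · by_cases hcard : J.card = p + 1
    · rw [extendByZero_of_card_eq _ hcard]
      exact h ⟨J, hcard⟩
    · rw [extendByZero_of_card_ne _ hcard, map_zero, Prod.fst_zero]

lemma finrank_range_koszulDifferential_X [Nontrivial k] (p : ℕ) :
    Module.finrank k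
      (LinearMap.range (koszulDifferential (X : σ → MvPolynomial σ k) p (SquareZeroAlgebra σ k))) =
        (Fintype.card σ).choose (p + 1) := by
  rw [finrank_range_of_ker_eq_ker (constantTerms_surjective (p + 1)) (ker_koszulDifferential_X p),
    Module.finrank_fintype_fun_eq_card, card_powersetCard]

end SquareZeroKoszul

lemma mul_choose_add_choose_add_choose (n q : ℕ) :
    (q + 1) * (n + 1).choose (q + 2) + n.choose (q + 2) + n.choose (q + 1) =
      n.choose (q + 1) * (n + 1) := by
  have absorb := Nat.add_one_mul_choose_eq n (q + 1)
  rw [Nat.choose_succ_succ' n (q + 1)] at *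
  linarith

/-! ### Tor of the algebra of polynomials modulo quadrics -/

attribute [local instance] RestrictScalars.moduleOrig

section SquareZeroTor

variable (σ : Type u) (k : Type v) [CommRing k]

/-- `Tor_p^S(S ⧸ 𝔪², S ⧸ 𝔪)` for the ideal `𝔪` of the polynomial ring `S` generated by the
variables, as a `k`-module. -/
abbrev SquareZeroTor (p : ℕ) : Type (max u v) :=
  RestrictScalars k (MvPolynomial σ k)
    (((Tor (ModuleCat.{max u v} (MvPolynomial σ k)) p).obj
      (ModuleCat.of _ (SquareZeroAlgebra σ k))).obj
        (ModuleCat.of _ (MvPolynomial σ k ⧸ idealOfVars σ k)))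

/-- `Tor_{p+1}^S(S ⧸ 𝔪², S ⧸ 𝔪)` as Koszul cycles modulo Koszul boundaries. -/
def squareZeroTorEquivCyclesModBoundaries [LinearOrder σ] [Fintype σ] (p : ℕ) :
    SquareZeroTor σ k (p + 1) ≃ₗ[MvPolynomial σ k]
      LinearMap.ker (koszulDifferential (X : σ → MvPolynomial σ k) p (SquareZeroAlgebra σ k)) ⧸
        (LinearMap.range (koszulDifferential X (p + 1) (SquareZeroAlgebra σ k))).submoduleOf
          (LinearMap.ker (koszulDifferential X p (SquareZeroAlgebra σ k))) :=
  (torIsoKoszulHomology σ k (SquareZeroAlgebra σ k) (p + 1) ≪≫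
    ShortComplex.homologyMapIso
      ((koszulComplex.{u, v} X (SquareZeroAlgebra σ k)).isoSc' (p + 2) (p + 1) p (by simp)
        (by simp) ≪≫
      eqToIso (koszulComplex_sc' X _ p))).toLinearEquiv ≪≫ₗ
    homologyEquivCyclesModBoundaries _

end SquareZeroTor

theorem syzygies_most_singular_quadratic_algebra_general {σ : Type u} [Fintype σ] {k : Type v}
    [Field k] {p : ℕ} (hp : 1 ≤ p) :
    Module.Finite k (SquareZeroTor σ k p) ∧
      Module.finrank k (SquareZeroTor σ k p) = p * (Fintype.card σ + 1).choose (p + 1) := by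
  obtain ⟨q, rfl⟩ := Nat.exists_eq_add_of_le' hp
  let _ : LinearOrder σ := LinearOrder.lift' _ (Fintype.equivFin σ).injective
  have e := squareZeroTorEquivCyclesModBoundaries σ k q
  refine ⟨finite_of_equiv_cycles_mod_boundaries e, ?_⟩
  have dimensions := finrank_add_finrank_range_add_finrank_range (k := k) e
    (koszulDifferential_koszulDifferential _)
  rw [finrank_range_koszulDifferential_X, finrank_range_koszulDifferential_X,
    finrank_koszulChains] at dimensions
  linarith [mul_choose_add_choose_add_choose (Fintype.card σ) q]

section Augmentation

variable (n : ℕ)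

lemma squaresIdeal_eq_idealOfVars_sq : squaresIdeal n = idealOfVars (Fin n) ℂ ^ 2 := by
  rw [idealOfVars, pow_two, Ideal.span_mul_span']
  refine congrArg Ideal.span (Set.ext fun f => ?_)
  simp [Set.mem_mul, eq_comm]

/-- The augmentation of the polynomial ring, as a linear map to `CC n`. -/
def augmentation : Spoly n →ₗ[Spoly n] CC n where
  toFun f := (eval (fun _ => (0 : ℂ)) f : ℂ)
  map_add' := map_add (eval fun _ => (0 : ℂ))
  map_smul' := map_mul (eval fun _ => (0 : ℂ))

lemma augmentation_surjective : Function.Surjective (augmentation n) :=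
  fun c : ℂ => ⟨C c, eval_C c⟩

lemma ker_augmentation : LinearMap.ker (augmentation n) = idealOfVars (Fin n) ℂ := by
  ext f
  rw [mem_idealOfVars_iff, ← constantCoeff_eq, ← eval_zero]
  rfl

/-- `CC n` is the residue field of the polynomial ring at the origin. -/
def quotientIdealOfVarsEquivCC : CC n ≃ₗ[Spoly n] Spoly n ⧸ idealOfVars (Fin n) ℂ :=
  ((augmentation n).quotKerEquivOfSurjective (augmentation_surjective n)).symm ≪≫ₗ
    Submodule.quotEquivOfEq _ _ (ker_augmentation n)

/-- `TorModule n p` is the instance of `SquareZeroTor` with `n` variables over `ℂ`. -/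
def torModuleEquiv (p : ℕ) : TorModule n p ≃ₗ[ℂ] SquareZeroTor (Fin n) ℂ p :=
  let e : TorModule n p ≃ₗ[Spoly n] SquareZeroTor (Fin n) ℂ p :=
    (((Tor (ModuleCat.{0} (Spoly n)) p).mapIso (LinearEquiv.toModuleIso
        (Submodule.quotEquivOfEq _ _ (squaresIdeal_eq_idealOfVars_sq n)))).app _ ≪≫
      ((Tor (ModuleCat.{0} (Spoly n)) p).obj _).mapIso
        (quotientIdealOfVarsEquivCC n).toModuleIso).toLinearEquiv
  { e with map_smul' := fun c => e.map_smul (algebraMap ℂ (Spoly n) c) }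

end Augmentation

/-- Syzygies of the most singular commutative quadratic algebra `A = S(V)/(S²V)`:
for `p ≥ 1`, `Tor_p^S(A, ℂ)` is finite-dimensional over `ℂ` of dimension
`p · C(n+1, p+1)`, the dimension of the irreducible `GL_n`-module of the
hook Young diagram `[2, 1^{p−1}]`. -/
theorem syzygies_most_singular_quadratic_algebra (n p : ℕ) (hn : 0 < n) (hp : 1 ≤ p) :
    FiniteDimensional ℂ (TorModule n p) ∧
      Module.finrank ℂ (TorModule n p) = p * Nat.choose (n + 1) (p + 1) := by
  have e := torModuleEquiv n p
  have ⟨_, finrank_tor⟩ :=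
    syzygies_most_singular_quadratic_algebra_general (σ := Fin n) (k := ℂ) hp
  refine ⟨Module.Finite.equiv e.symm, ?_⟩
  rw [e.finrank_eq, finrank_tor, Fintype.card_fin]

end
end
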